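/- Let (Δ, M) be a uniform boundary pair with M connected (so Δ is a one-ended word hyperbolic group with Gromov boundary ∂_∞Δ ≅ M), let k ∈ ℕ be odd, and let ρ : Δ → SL_{2k+1}(ℝ) be a k-Anosov representation, i.e., relatively k-Anosov with respect to (Δ, M). Then M embeds in the k-sphere: there exists a continuous injective map from M into the unit sphere S^k of EuclideanSpace ℝ (Fin (k+1)). -/

import Mathlib

open Filter Topology Matrix

noncomputable instance projectivizationTopology
    {K V : Type*} [DivisionRing K] [AddCommGroup V] [Module K V] [TopologicalSpace V] :
    TopologicalSpace (Projectivization K V) :=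
  inferInstanceAs (TopologicalSpace (Quotient _))

/-- `g n • z → a` locally uniformly on `M ∖ {b}`. -/
def ConvLocUnif {Γ M : Type} [SMul Γ M] [TopologicalSpace M]
    (g : ℕ → Γ) (a b : M) : Prop :=
  ∀ K : Set M, IsCompact K → b ∉ K →
    ∀ U ∈ 𝓝 a, ∀ᶠ n in atTop, ∀ z ∈ K, g n • z ∈ U

/-- The action of `Γ` on `M` is an action by homeomorphisms with the convergence property. -/
def IsConvergenceAction (Γ M : Type) [Group Γ] [TopologicalSpace M] [MulAction Γ M] : Prop :=
  (∀ γ : Γ, Continuous fun x : M => γ • x) ∧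
  ∀ g : ℕ → Γ, Function.Injective g →
    ∃ φ : ℕ → ℕ, StrictMono φ ∧ ∃ a b : M, ConvLocUnif (fun n => g (φ n)) a b

def IsConicalLimitPoint (Γ : Type) {M : Type} [Group Γ] [TopologicalSpace M]
    [MulAction Γ M] (x : M) : Prop :=
  ∃ a b : M, a ≠ b ∧ ∃ g : ℕ → Γ,
    Tendsto (fun n => g n • x) atTop (𝓝 a) ∧
    ∀ y : M, y ≠ x → Tendsto (fun n => g n • y) atTop (𝓝 b)

def IsBoundedParabolicPoint (Γ : Type) {M : Type} [Group Γ] [TopologicalSpace M]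
    [MulAction Γ M] (x : M) : Prop :=
  Infinite (MulAction.stabilizer Γ x) ∧
  (∀ y : M, (∀ γ ∈ MulAction.stabilizer Γ x, γ • y = y) → y = x) ∧
  (∃ K : Set M, IsCompact K ∧ x ∉ K ∧
    ∀ y : M, y ≠ x → ∃ γ ∈ MulAction.stabilizer Γ x, γ • y ∈ K)

/-- `(Γ, M)` is a boundary pair: `Γ` is a finitely generated group acting as a geometrically
finite convergence group on the perfect compact metrizable space `M`. -/
structure IsBoundaryPair (Γ M : Type) [Group Γ] [TopologicalSpace M] [MulAction Γ M] : Prop where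
  fg : Group.FG Γ
  compact : CompactSpace M
  metrizable : TopologicalSpace.MetrizableSpace M
  perfect : ∀ x : M, Filter.NeBot (𝓝[≠] x)
  conv : IsConvergenceAction Γ M
  gf : ∀ x : M, IsConicalLimitPoint Γ x ∨
    (IsBoundedParabolicPoint Γ x ∧ Group.FG (MulAction.stabilizer Γ x))

/-- The linear functional on the exterior algebra of `K^d` extracting the top-degree
coefficient: it sends `v₁ ∧ ⋯ ∧ v_d` to `det (v₁, …, v_d)` and is zero in other degrees. -/
noncomputable def topDegreeDet (K : Type*) [Field K] (d : ℕ) :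
    ExteriorAlgebra K (Fin d → K) →ₗ[K] K :=
  ExteriorAlgebra.liftAlternating
    (fun i => if h : i = d then by subst h; exact Matrix.detRowAlternating else 0)

/-- The wedge of the standard basis vectors indexed by `s`, in increasing order. -/
noncomputable def stdBasisWedge (K : Type*) [Field K] {d : ℕ} (s : Finset (Fin d)) :
    ExteriorAlgebra K (Fin d → K) :=
  ((s.sort (· ≤ ·)).map fun j => ExteriorAlgebra.ι K (Pi.single j (1 : K))).prod

/-- The Plücker coordinates of an element of the exterior algebra of `K^d`, obtained by
wedging with complementary standard basis wedges and extracting the top coefficient. -/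
noncomputable def extCoordinates (K : Type*) [Field K] (d : ℕ) :
    ExteriorAlgebra K (Fin d → K) →ₗ[K] (Finset (Fin d) → K) :=
  LinearMap.pi fun s => (topDegreeDet K d).comp (LinearMap.mulRight K (stdBasisWedge K s))

/-- The standard topology on the `k`-th exterior power of `K^d`, induced by Plücker
coordinates. -/
noncomputable instance exteriorPowerTopology (K : Type*) [Field K] [TopologicalSpace K]
    (d k : ℕ) : TopologicalSpace (⋀[K]^k (Fin d → K)) :=
  TopologicalSpace.induced
    (fun ω => extCoordinates K d (↑ω : ExteriorAlgebra K (Fin d → K))) inferInstance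

/-- `v₁ ∧ ⋯ ∧ v_k` as an element of the `k`-th exterior power. -/
noncomputable def wedgeMk (K : Type*) {V : Type*} [CommRing K] [AddCommGroup V] [Module K V]
    (k : ℕ) (v : Fin k → V) : ⋀[K]^k V :=
  ⟨ExteriorAlgebra.ιMulti K k v, ExteriorAlgebra.ιMulti_range K k (Set.mem_range_self v)⟩

/-- A relatively `k`-Anosov representation into `SL_d(ℝ)`, in the Plücker formulation:
limit maps into the projectivizations of the exterior powers `⋀^k ℝ^d` and `⋀^{d-k} ℝ^d`,
taking decomposable values, equivariant, transverse and strongly dynamics-preserving. -/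
structure IsRelAnosov {Γ M : Type} [Group Γ] [TopologicalSpace M] [MulAction Γ M] {d : ℕ}
    (k : ℕ) (ρ : Γ →* Matrix.SpecialLinearGroup (Fin d) ℝ)
    (ξk : M → Projectivization ℝ (⋀[ℝ]^k (Fin d → ℝ)))
    (ξdk : M → Projectivization ℝ (⋀[ℝ]^(d - k) (Fin d → ℝ))) : Prop where
  continuous_fst : Continuous ξk
  continuous_snd : Continuous ξdk
  decomposable_fst : ∀ x : M, ∃ (v : Fin k → (Fin d → ℝ)) (_ : LinearIndependent ℝ v)
      (hne : wedgeMk ℝ k v ≠ 0), ξk x = Projectivization.mk ℝ (wedgeMk ℝ k v) hne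
  decomposable_snd : ∀ x : M, ∃ (w : Fin (d - k) → (Fin d → ℝ)) (_ : LinearIndependent ℝ w)
      (hne : wedgeMk ℝ (d - k) w ≠ 0), ξdk x = Projectivization.mk ℝ (wedgeMk ℝ (d - k) w) hne
  equivariant_fst : ∀ (γ : Γ) (x : M) (v : Fin k → (Fin d → ℝ))
      (hne : wedgeMk ℝ k v ≠ 0)
      (hne' : wedgeMk ℝ k (fun i => (ρ γ : Matrix (Fin d) (Fin d) ℝ) *ᵥ v i) ≠ 0),
      ξk x = Projectivization.mk ℝ (wedgeMk ℝ k v) hne →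
      ξk (γ • x) = Projectivization.mk ℝ
        (wedgeMk ℝ k (fun i => (ρ γ : Matrix (Fin d) (Fin d) ℝ) *ᵥ v i)) hne'
  equivariant_snd : ∀ (γ : Γ) (x : M) (w : Fin (d - k) → (Fin d → ℝ))
      (hne : wedgeMk ℝ (d - k) w ≠ 0)
      (hne' : wedgeMk ℝ (d - k) (fun i => (ρ γ : Matrix (Fin d) (Fin d) ℝ) *ᵥ w i) ≠ 0),
      ξdk x = Projectivization.mk ℝ (wedgeMk ℝ (d - k) w) hne →
      ξdk (γ • x) = Projectivization.mk ℝ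
        (wedgeMk ℝ (d - k) (fun i => (ρ γ : Matrix (Fin d) (Fin d) ℝ) *ᵥ w i)) hne'
  transverse : ∀ (x y : M), x ≠ y → ∀ (v : Fin k → (Fin d → ℝ)) (w : Fin (d - k) → (Fin d → ℝ))
      (hv : wedgeMk ℝ k v ≠ 0) (hw : wedgeMk ℝ (d - k) w ≠ 0),
      ξk x = Projectivization.mk ℝ (wedgeMk ℝ k v) hv →
      ξdk y = Projectivization.mk ℝ (wedgeMk ℝ (d - k) w) hw →
      ((wedgeMk ℝ k v : ⋀[ℝ]^k (Fin d → ℝ)) : ExteriorAlgebra ℝ (Fin d → ℝ)) *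
        ((wedgeMk ℝ (d - k) w : ⋀[ℝ]^(d - k) (Fin d → ℝ)) : ExteriorAlgebra ℝ (Fin d → ℝ)) ≠ 0
  dynamics : ∀ (g : ℕ → Γ) (x y : M),
      (∀ z : M, z ≠ y → Tendsto (fun n => g n • z) atTop (𝓝 x)) →
      (∀ z : M, z ≠ x → Tendsto (fun n => (g n)⁻¹ • z) atTop (𝓝 y)) →
      ∀ (w : Fin (d - k) → (Fin d → ℝ)) (hw : wedgeMk ℝ (d - k) w ≠ 0),
      ξdk y = Projectivization.mk ℝ (wedgeMk ℝ (d - k) w) hw →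
      ∀ (u : Fin k → (Fin d → ℝ))
        (hu : ∀ n, wedgeMk ℝ k (fun i => (ρ (g n) : Matrix (Fin d) (Fin d) ℝ) *ᵥ u i) ≠ 0),
        ((wedgeMk ℝ k u : ⋀[ℝ]^k (Fin d → ℝ)) : ExteriorAlgebra ℝ (Fin d → ℝ)) *
          ((wedgeMk ℝ (d - k) w : ⋀[ℝ]^(d - k) (Fin d → ℝ)) : ExteriorAlgebra ℝ (Fin d → ℝ)) ≠ 0 →
        Tendsto (fun n => Projectivization.mk ℝ
            (wedgeMk ℝ k (fun i => (ρ (g n) : Matrix (Fin d) (Fin d) ℝ) *ᵥ u i)) (hu n))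
          atTop (𝓝 (ξk x))

/-- If `F` is connected and `F ∖ {y} = N ⊔ S` is an open splitting then `N ∪ {y}` is connected. -/
theorem aux_union_conn {F : Type*} [TopologicalSpace F] [PreconnectedSpace F]
    (y : F) (N S : Set F) (hN : IsOpen N) (hS : IsOpen S) (hd : Disjoint N S)
    (hyN : y ∉ N) (hyS : y ∉ S) (hc : N ∪ S = {y}ᶜ) : IsPreconnected (insert y N) := by
  have hclosed : IsClosed (insert y N) := by
    have : insert y N = Sᶜ := by
      ext z
      have h1 : z ∈ N ∪ S ↔ z ∈ ({y}ᶜ : Set F) := by rw [hc]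
      have h2 : z ∈ N → z ∉ S := fun a b => Set.disjoint_left.1 hd a b
      simp only [Set.mem_union, Set.mem_compl_iff, Set.mem_singleton_iff] at h1
      simp only [Set.mem_insert_iff, Set.mem_compl_iff]
      by_cases hz : z = y
      · subst hz; simp [hyS]
      · tauto
    rw [this]; exact hS.isClosed_compl
  have key : ∀ A B : Set F, IsClosed A → IsClosed B → insert y N ⊆ A ∪ B →
      (insert y N ∩ (A ∩ B)) = ∅ → y ∈ A → insert y N ∩ B = ∅ := by
    intro A B hA hB hAB hdis hy
    have hB' : insert y N ∩ B = N ∩ Aᶜ := by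
      ext z
      constructor
      · rintro ⟨hz, hzB⟩
        have hzA : z ∉ A := fun h => by
          have : z ∈ (insert y N ∩ (A ∩ B)) := ⟨hz, h, hzB⟩
          rw [hdis] at this; exact this
        refine ⟨?_, hzA⟩
        rcases hz with rfl | hz
        · exact absurd hy hzA
        · exact hz
      · rintro ⟨hz, hzA⟩
        exact ⟨Or.inr hz, (hAB (Or.inr hz)).resolve_left hzA⟩
    have hclopen : IsClopen (insert y N ∩ B) :=
      ⟨hclosed.inter hB, by rw [hB']; exact hN.inter hA.isOpen_compl⟩
    rcases isClopen_iff.1 hclopen with h | h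
    · exact h
    · exfalso
      have : y ∈ insert y N ∩ B := by rw [h]; trivial
      rw [hB'] at this; exact hyN this.1
  rw [isPreconnected_closed_iff]
  intro A B hA hB hAB hnA hnB
  by_contra hcon
  rw [Set.not_nonempty_iff_eq_empty] at hcon
  rcases hAB (Set.mem_insert y N) with h | h
  · have := key A B hA hB hAB hcon h
    rw [this] at hnB; exact Set.not_nonempty_empty hnB
  · have := key B A hB hA (by rwa [Set.union_comm]) (by rwa [Set.inter_comm B A]) h
    rw [this] at hnA; exact Set.not_nonempty_empty hnA

/-- Cut decomposition of a point of a connected `T1` space. -/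
theorem aux_cut {M : Type*} [TopologicalSpace M] [T1Space M] (y : M)
    (h : ¬ IsPreconnected ({y}ᶜ : Set M)) :
    ∃ N S : Set M, IsOpen N ∧ IsOpen S ∧ Disjoint N S ∧ y ∉ N ∧ y ∉ S ∧ N ∪ S = {y}ᶜ ∧
      N.Nonempty ∧ S.Nonempty := by
  rw [IsPreconnected] at h
  push Not at h
  obtain ⟨A, B, hA, hB, hAB, hnA, hnB, hemp⟩ := h
  have ho : IsOpen ({y}ᶜ : Set M) := isOpen_compl_singleton
  refine ⟨{y}ᶜ ∩ A, {y}ᶜ ∩ B, ho.inter hA, ho.inter hB, ?_, by simp, by simp, ?_, hnA, hnB⟩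
  · rw [Set.disjoint_left]
    rintro z ⟨h1, h2⟩ ⟨_, h3⟩
    have : z ∈ ({y}ᶜ ∩ (A ∩ B) : Set M) := ⟨h1, h2, h3⟩
    rw [hemp] at this; exact this
  · rw [← Set.inter_union_distrib_left]; exact Set.inter_eq_left.2 hAB

/-- Existence of a non-cut point in a nontrivial continuum. -/
theorem aux_noncut {M : Type*} [TopologicalSpace M] [CompactSpace M] [T2Space M]
    [ConnectedSpace M] : ∃ x : M, IsPreconnected ({x}ᶜ : Set M) := by
  by_contra hcon
  push Not at hcon
  obtain ⟨x⟩ := (inferInstance : Nonempty M)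
  -- choose for each `y ≠ x` a splitting with `x ∈ V y`
  have hsplit : ∀ y : M, ∃ N S : Set M, IsOpen N ∧ IsOpen S ∧ Disjoint N S ∧ y ∉ N ∧ y ∉ S ∧
      N ∪ S = {y}ᶜ ∧ N.Nonempty ∧ S.Nonempty ∧ (y ≠ x → x ∈ S) := by
    intro y
    obtain ⟨N, S, hN, hS, hd, hyN, hyS, hc, hnN, hnS⟩ := aux_cut y (hcon y)
    by_cases hyx : y = x
    · exact ⟨N, S, hN, hS, hd, hyN, hyS, hc, hnN, hnS, fun h => absurd hyx h⟩
    have hx : x ∈ N ∪ S := by rw [hc]; exact fun h => hyx h.symm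
    rcases hx with hx | hx
    · exact ⟨S, N, hS, hN, hd.symm, hyS, hyN, by rwa [Set.union_comm], hnS, hnN, fun _ => hx⟩
    · exact ⟨N, S, hN, hS, hd, hyN, hyS, hc, hnN, hnS, fun _ => hx⟩
  choose U V hU hV hd hyU hyV hc hnU hnV hxV using hsplit
  have hUc : ∀ y, IsPreconnected (insert y (U y)) := fun y =>
    aux_union_conn y (U y) (V y) (hU y) (hV y) (hd y) (hyU y) (hyV y) (hc y)
  have hVc : ∀ y, IsPreconnected (insert y (V y)) := fun y =>
    aux_union_conn y (V y) (U y) (hV y) (hU y) (hd y).symm (hyV y) (hyU y)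
      (by rw [Set.union_comm]; exact hc y)
  have hUcl : ∀ y, insert y (U y) = (V y)ᶜ := by
    intro y; ext z
    have h1 : z ∈ U y ∪ V y ↔ z ∈ ({y}ᶜ : Set M) := by rw [hc]
    have h2 : z ∈ U y → z ∉ V y := fun a b => Set.disjoint_left.1 (hd y) a b
    simp only [Set.mem_union, Set.mem_compl_iff, Set.mem_singleton_iff] at h1
    simp only [Set.mem_insert_iff, Set.mem_compl_iff]
    by_cases hz : z = y
    · subst hz; simp [hyV]
    · tauto
  -- if `p ∈ U y`, `y ≠ x`, then `insert p (U p) ⊆ U y`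
  have hnest : ∀ y p, y ≠ x → p ∈ U y → insert p (U p) ⊆ U y := by
    intro y p hy hp
    have hpy : p ≠ y := fun h => hyU y (h ▸ hp)
    have hpx : p ≠ x := fun h => Set.disjoint_left.1 (hd y) hp (h ▸ hxV y hy)
    have hpV : p ∉ V y := fun h => Set.disjoint_left.1 (hd y) hp h
    have hsub : insert y (V y) ⊆ V p := by
      have h1 : insert y (V y) ⊆ U p ∪ V p := by
        rw [hc]; rintro z (rfl | hz)
        · exact fun h => hpy (by simpa using h.symm)
        · exact fun h => hpV (by rw [Set.mem_singleton_iff] at h; rwa [h] at hz)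
      refine (hVc y).subset_right_of_subset_union (hU p) (hV p) (hd p) h1 ?_
      exact ⟨x, Or.inr (hxV y hy), hxV p hpx⟩
    intro z hz
    rw [hUcl p] at hz
    have hzV : z ∉ V y := fun h => hz (hsub (Or.inr h))
    have hzy : z ≠ y := fun h => hz (hsub (by rw [h]; exact Set.mem_insert _ _))
    have : z ∈ U y ∪ V y := by rw [hc]; exact hzy
    exact this.resolve_right hzV
  obtain ⟨y0, hy0⟩ := hnU x
  have hy0x : y0 ≠ x := fun h => hyU x (h ▸ hy0)
  let 𝒮 : Set (Set M) := {A | ∃ y, y ≠ x ∧ A = insert y (U y)}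
  have hzorn : ∃ m, Minimal (· ∈ 𝒮) m := by
    refine zorn_superset 𝒮 ?_
    intro c hcS hchain
    by_cases hne : c.Nonempty
    swap
    · rw [Set.not_nonempty_iff_eq_empty] at hne
      exact ⟨insert y0 (U y0), ⟨y0, hy0x, rfl⟩, by simp [hne]⟩
    have : Nonempty c := hne.to_subtype
    have hinter : (⋂₀ c).Nonempty := by
      refine IsCompact.nonempty_sInter_of_directed_nonempty_isCompact_isClosed ?_ ?_ ?_ ?_
      · intro A hA B hB
        rcases hchain.total hA hB with h | h
        · exact ⟨A, hA, le_rfl, h⟩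
        · exact ⟨B, hB, h, le_rfl⟩
      · intro A hA
        obtain ⟨y, _, rfl⟩ := hcS hA
        exact ⟨y, Set.mem_insert _ _⟩
      · intro A hA
        obtain ⟨y, _, rfl⟩ := hcS hA
        rw [hUcl]; exact (hV y).isClosed_compl.isCompact
      · intro A hA
        obtain ⟨y, _, rfl⟩ := hcS hA
        rw [hUcl]; exact (hV y).isClosed_compl
    obtain ⟨p, hp⟩ := hinter
    have hpx : p ≠ x := by
      rintro rfl
      obtain ⟨A, hA⟩ := hne
      obtain ⟨y, hy, rfl⟩ := hcS hA
      have := hp _ hA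
      rw [hUcl] at this
      exact this (hxV y hy)
    refine ⟨insert p (U p), ⟨p, hpx, rfl⟩, ?_⟩
    intro A hA
    obtain ⟨y, hy, rfl⟩ := hcS hA
    rcases hp _ hA with h | h
    · rw [h]
    · exact (hnest y p hy h).trans (Set.subset_insert _ _)
  obtain ⟨m, ⟨p, hpx, rfl⟩, hmin⟩ := hzorn
  obtain ⟨q, hq⟩ := hnU p
  have hqx : q ≠ x := fun h => Set.disjoint_left.1 (hd p) hq (h ▸ hxV p hpx)
  have hsub := hnest p q hpx hq
  have := hmin (y := insert q (U q)) ⟨q, hqx, rfl⟩ (hsub.trans (Set.subset_insert _ _))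
  exact hyU p (hsub (this (Set.mem_insert _ _)))

/-- Dichotomy: a symmetric, separately locally constant sign on distinct pairs of a connected
space is constant. -/
theorem aux_dichotomy {F : Type*} [TopologicalSpace F] [PreconnectedSpace F]
    (f : F → F → ℝ) (hsymm : ∀ y z, f y z = f z y) (hne : ∀ y z, y ≠ z → f y z ≠ 0)
    (hpos : ∀ y, IsOpen {z | z ≠ y ∧ 0 < f y z}) (hneg : ∀ y, IsOpen {z | z ≠ y ∧ f y z < 0}) :
    (∀ y z, y ≠ z → 0 < f y z) ∨ (∀ y z, y ≠ z → f y z < 0) := by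
  have hdis : ∀ y, Disjoint {z | z ≠ y ∧ 0 < f y z} {z | z ≠ y ∧ f y z < 0} := by
    intro y; rw [Set.disjoint_left]; rintro z ⟨_, h1⟩ ⟨_, h2⟩; linarith
  have hun : ∀ y, {z | z ≠ y ∧ 0 < f y z} ∪ {z | z ≠ y ∧ f y z < 0} = {y}ᶜ := by
    intro y; ext z
    simp only [Set.mem_union, Set.mem_ofPred_eq, Set.mem_compl_iff, Set.mem_singleton_iff]
    constructor
    · tauto
    · intro h
      rcases lt_or_gt_of_ne (hne y z (Ne.symm h)) with h' | h' <;> tauto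
  have hPc : ∀ y, IsPreconnected (insert y {z | z ≠ y ∧ 0 < f y z}) := fun y =>
    aux_union_conn y _ _ (hpos y) (hneg y) (hdis y) (by simp) (by simp) (hun y)
  have hNc : ∀ y, IsPreconnected (insert y {z | z ≠ y ∧ f y z < 0}) := fun y =>
    aux_union_conn y _ _ (hneg y) (hpos y) (hdis y).symm (by simp) (by simp)
      (by rw [Set.union_comm]; exact hun y)
  have key : ∀ y z w, z ≠ y → f y z < 0 → w ≠ y → 0 < f y w → False := by
    intro y z w hz hfz hw hfw
    have hzw : z ≠ w := by rintro rfl; linarith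
    have h1 : insert y {u | u ≠ y ∧ 0 < f y u} ⊆ {u | u ≠ z ∧ f z u < 0} := by
      refine (hPc y).subset_right_of_subset_union (hpos z) (hneg z) (hdis z) ?_ ?_
      · rw [hun]; rintro u (rfl | hu)
        · exact fun h => hz (by simpa using h.symm)
        · rintro h; rw [Set.mem_singleton_iff] at h; subst h; linarith [hu.2]
      · exact ⟨y, Set.mem_insert _ _, hz.symm, by rw [hsymm]; exact hfz⟩
    have h2 : insert y {u | u ≠ y ∧ f y u < 0} ⊆ {u | u ≠ w ∧ 0 < f w u} := by
      refine (hNc y).subset_left_of_subset_union (hpos w) (hneg w) (hdis w) ?_ ?_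
      · rw [hun]; rintro u (rfl | hu)
        · exact fun h => hw (by simpa using h.symm)
        · rintro h; rw [Set.mem_singleton_iff] at h; subst h; linarith [hu.2]
      · exact ⟨y, Set.mem_insert _ _, hw.symm, by rw [hsymm]; exact hfw⟩
    have a1 := (h1 (Or.inr ⟨hw, hfw⟩)).2
    have a2 := (h2 (Or.inr ⟨hz, hfz⟩)).2
    rw [hsymm] at a1
    linarith
  by_cases hex : ∃ y z, y ≠ z ∧ f y z < 0
  swap
  · left; intro y z hyz
    push Not at hex
    exact lt_of_le_of_ne (hex y z hyz) (hne y z hyz).symm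
  right
  obtain ⟨y0, z0, h0, hf0⟩ := hex
  have hall0 : ∀ w, w ≠ y0 → f y0 w < 0 := by
    intro w hw
    rcases lt_or_gt_of_ne (hne y0 w hw.symm) with h | h
    · exact h
    · exact (key y0 z0 w h0.symm hf0 hw h).elim
  intro y z hyz
  by_cases hy : y = y0
  · subst hy; exact hall0 z hyz.symm
  · have := hall0 y hy
    rw [hsymm] at this
    rcases lt_or_gt_of_ne (hne y z hyz) with h | h
    · exact h
    · exact (key y y0 z (Ne.symm hy) this hyz.symm h).elim

theorem aux_order_embed {F : Type*} [TopologicalSpace F] [LinearOrder F] [PreconnectedSpace F]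
    [TopologicalSpace.SeparableSpace F] [Nontrivial F]
    (hI : ∀ a : F, IsOpen (Set.Ioi a)) (hJ : ∀ a : F, IsOpen (Set.Iio a)) :
    ∃ φ : F → EReal, Continuous φ ∧ StrictMono φ ∧ ∀ r : ℚ, ∃ d, φ d = ((r : ℝ) : EReal) := by
  obtain ⟨s, hsc, hsd⟩ := TopologicalSpace.exists_countable_dense F
  have hIoo : ∀ a b : F, a < b → (Set.Ioo a b).Nonempty := by
    intro a b hab
    have := isPreconnected_univ (α := F) (Set.Ioi a) (Set.Iio b) (hI a) (hJ b)
      (by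
        intro z _
        rcases lt_or_ge a z with h | h
        · exact Or.inl h
        · exact Or.inr (lt_of_le_of_lt h hab)) ⟨b, trivial, hab⟩ ⟨a, trivial, hab⟩
    obtain ⟨z, _, h1, h2⟩ := this
    exact ⟨z, h1, h2⟩
  let D : Set F := {d | d ∈ s ∧ (∃ a, a < d) ∧ ∃ b, d < b}
  have hD : ∀ a b : F, a < b → ∃ d : D, a < d ∧ (d : F) < b := by
    intro a b hab
    obtain ⟨d, hd, hds⟩ := hsd.inter_open_nonempty (Set.Ioo a b)
      ((hI a).inter (hJ b)) (hIoo a b hab)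
    exact ⟨⟨d, hds, ⟨a, hd.1⟩, ⟨b, hd.2⟩⟩, hd.1, hd.2⟩
  have : Countable D := (hsc.mono (fun d hd => hd.1)).to_subtype
  have : DenselyOrdered D := ⟨fun a b hab => by
    obtain ⟨d, h1, h2⟩ := hD a b hab
    exact ⟨d, h1, h2⟩⟩
  have : NoMinOrder D := ⟨fun a => by
    obtain ⟨b, hb⟩ := a.2.2.1
    obtain ⟨d, h1, h2⟩ := hD b a hb
    exact ⟨d, h2⟩⟩
  have : NoMaxOrder D := ⟨fun a => by
    obtain ⟨b, hb⟩ := a.2.2.2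
    obtain ⟨d, h1, h2⟩ := hD a b hb
    exact ⟨d, h1⟩⟩
  have : Nonempty D := by
    obtain ⟨a, b, hab⟩ := exists_pair_lt F
    obtain ⟨d, _⟩ := hD a b hab
    exact ⟨d⟩
  obtain ⟨e⟩ := Order.iso_of_countable_dense D ℚ
  let φ : F → EReal := fun y => sSup {r : EReal | ∃ d : D, (d : F) < y ∧ r = ((e d : ℝ) : EReal)}
  have hle : ∀ (d : D) (y : F), (d : F) < y → ((e d : ℝ) : EReal) ≤ φ y := fun d y h =>
    le_sSup ⟨d, h, rfl⟩
  have hge : ∀ (d : D) (y : F), y ≤ (d : F) → φ y ≤ ((e d : ℝ) : EReal) := by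
    intro d y h
    apply sSup_le
    rintro r ⟨d', hd', rfl⟩
    have : d' < d := Subtype.coe_lt_coe.1 (lt_of_lt_of_le hd' h)
    exact_mod_cast (e.strictMono this).le
  have hmono : StrictMono φ := by
    intro y z hyz
    obtain ⟨d1, h1, h2⟩ := hD y z hyz
    obtain ⟨d2, h3, h4⟩ := hD d1 z h2
    calc φ y ≤ ((e d1 : ℝ) : EReal) := hge d1 y h1.le
      _ < ((e d2 : ℝ) : EReal) := by
          have : d1 < d2 := h3
          exact_mod_cast e.strictMono this
      _ ≤ φ z := hle d2 z h4
  have hval : ∀ d : D, φ d = ((e d : ℝ) : EReal) := by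
    intro d
    apply le_antisymm (hge d d le_rfl)
    by_contra hcon
    rw [not_le] at hcon
    obtain ⟨r, hr1, hr2⟩ := EReal.lt_iff_exists_rat_btwn.1 hcon
    have h1 : r < e d := by exact_mod_cast hr2
    have h2 : e.symm r < d := by
      have := e.symm.strictMono h1
      simpa using this
    have := hle (e.symm r) d h2
    simp only [OrderIso.apply_symm_apply] at this
    exact absurd hr1 (not_lt.2 this)
  have hval' : ∀ r : ℚ, φ (e.symm r : D) = ((r : ℝ) : EReal) := by
    intro r; rw [hval]; simp
  refine ⟨φ, ?_, hmono, fun r => ⟨e.symm r, hval' r⟩⟩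
  rw [continuous_iff_continuousAt]
  intro y
  rw [ContinuousAt, tendsto_order]
  constructor
  · intro c hc
    obtain ⟨r, hr1, hr2⟩ := EReal.lt_iff_exists_rat_btwn.1 hc
    have hr2' : φ (e.symm r : D) < φ y := by rw [hval']; exact hr2
    have : (e.symm r : F) < y := hmono.lt_iff_lt.1 hr2'
    filter_upwards [(hI _).mem_nhds this] with z hz
    have h3 := hmono (show ((e.symm r : D) : F) < z from hz)
    rw [hval'] at h3
    exact hr1.trans h3
  · intro c hc
    obtain ⟨r, hr1, hr2⟩ := EReal.lt_iff_exists_rat_btwn.1 hc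
    have hr2' : φ y < φ (e.symm r : D) := by rw [hval']; exact hr1
    have : y < (e.symm r : F) := hmono.lt_iff_lt.1 hr2'
    filter_upwards [(hJ _).mem_nhds this] with z hz
    have h3 := hmono (show z < ((e.symm r : D) : F) from hz)
    rw [hval'] at h3
    exact h3.trans hr2

theorem aux_tendsto_cocompact_real {F : Type*} (l : Filter F) (g : F → ℝ)
    (h : ∀ c : ℝ, ∀ᶠ y in l, c ≤ |g y|) : Tendsto g l (cocompact ℝ) := by
  rw [← Metric.cobounded_eq_cocompact, ← tendsto_norm_atTop_iff_cobounded]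
  exact tendsto_atTop.2 h

theorem aux_order_case_min {F : Type*} [TopologicalSpace F] [LinearOrder F]
    (φ : F → EReal) (hφ : Continuous φ) (hmono : StrictMono φ)
    (hr : ∀ r : ℚ, ∃ d, φ d = ((r : ℝ) : EReal)) (l : Filter F) [l.NeBot]
    (hl : ∀ d d' : F, ∀ᶠ y in l, (d < y ↔ d' < y)) (hl' : ∀ d : F, ∀ᶠ y in l, y ≠ d)
    (m : F) (hm : ∀ y, m ≤ y) :
    ∃ g : F → ℝ, Continuous g ∧ Function.Injective g ∧ Tendsto g l (cocompact ℝ) := by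
  have hgt : ∀ d, ∀ᶠ y in l, d < y := by
    intro d
    filter_upwards [hl m d, hl' m] with y h1 h2
    exact h1.1 (lt_of_le_of_ne (hm y) h2.symm)
  have htop : ∀ y, φ y ≠ ⊤ := by
    intro y hy
    obtain ⟨z, hz⟩ := (hgt y).exists
    have := hmono hz
    rw [hy] at this
    exact absurd this not_top_lt
  have hfin : ∀ y, EReal.exp (φ y) ≠ ⊤ := fun y h => htop y (EReal.exp_eq_top_iff.1 h)
  refine ⟨fun y => (EReal.exp (φ y)).toReal, ?_, ?_, ?_⟩
  · have h1 : Continuous fun y => EReal.exp (φ y) := ENNReal.continuous_exp.comp hφ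
    exact ENNReal.continuousOn_toReal.comp_continuous h1 hfin
  · intro y z h
    have := (ENNReal.toReal_eq_toReal_iff' (hfin y) (hfin z)).1 h
    exact hmono.injective (EReal.exp_strictMono.injective this)
  · apply aux_tendsto_cocompact_real
    intro c
    obtain ⟨r, hrc⟩ := exists_rat_gt (max c 1)
    obtain ⟨d, hd⟩ := hr r
    filter_upwards [hgt d] with y hy
    have h1 : EReal.exp ((r : ℝ) : EReal) < EReal.exp (φ y) := by
      rw [← hd]; exact EReal.exp_strictMono (hmono hy)
    rw [EReal.exp_coe] at h1
    have h2 := (ENNReal.ofReal_lt_iff_lt_toReal (Real.exp_pos _).le (hfin y)).1 h1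
    have h3 := Real.add_one_le_exp (r : ℝ)
    have h4 := le_max_left c 1
    exact le_trans (by linarith) (le_abs_self _)

theorem aux_order_case {F : Type*} [TopologicalSpace F] [LinearOrder F] [PreconnectedSpace F]
    [TopologicalSpace.SeparableSpace F] [Nontrivial F]
    (hI : ∀ a : F, IsOpen (Set.Ioi a)) (hJ : ∀ a : F, IsOpen (Set.Iio a))
    (l : Filter F) [l.NeBot]
    (hl : ∀ d d' : F, ∀ᶠ y in l, (d < y ↔ d' < y)) (hl' : ∀ d : F, ∀ᶠ y in l, y ≠ d) :
    ∃ g : F → ℝ, Continuous g ∧ Function.Injective g ∧ Tendsto g l (cocompact ℝ) := by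
  obtain ⟨φ, hφ, hmono, hr⟩ := aux_order_embed hI hJ
  by_cases hmin : ∃ m : F, ∀ y, m ≤ y
  · obtain ⟨m, hm⟩ := hmin
    exact aux_order_case_min φ hφ hmono hr l hl hl' m hm
  by_cases hmax : ∃ m : F, ∀ y, y ≤ m
  · obtain ⟨m, hm⟩ := hmax
    have hne : @Filter.NeBot Fᵒᵈ l := ‹l.NeBot›
    refine @aux_order_case_min Fᵒᵈ _ _ (fun y => - φ y) (continuous_neg.comp hφ) ?_ ?_ l hne ?_ hl' m hm
    · intro y z hyz
      exact EReal.neg_lt_neg_iff.2 (hmono (show (OrderDual.ofDual z) < OrderDual.ofDual y from hyz))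
    · intro r
      obtain ⟨d, hd⟩ := hr (-r)
      exact ⟨d, by change - φ d = _; rw [hd]; push_cast; simp⟩
    · intro d d'
      filter_upwards [hl d d', hl' d, hl' d'] with y h1 h2 h3
      change y < (show F from d) ↔ y < (show F from d')
      have e1 : y < (show F from d) ↔ ¬ ((show F from d) < y) :=
        ⟨fun h => not_lt.2 h.le, fun h => lt_of_le_of_ne (not_lt.1 h) h2⟩
      have e2 : y < (show F from d') ↔ ¬ ((show F from d') < y) :=
        ⟨fun h => not_lt.2 h.le, fun h => lt_of_le_of_ne (not_lt.1 h) h3⟩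
      rw [e1, e2, h1]
  push Not at hmin hmax
  have hbot : ∀ y, φ y ≠ ⊥ := by
    intro y hy
    obtain ⟨z, hz⟩ := hmin y
    have := hmono hz
    rw [hy] at this
    exact absurd this not_lt_bot
  have htop : ∀ y, φ y ≠ ⊤ := by
    intro y hy
    obtain ⟨z, hz⟩ := hmax y
    have := hmono hz
    rw [hy] at this
    exact absurd this not_top_lt
  refine ⟨fun y => (φ y).toReal, ?_, ?_, ?_⟩
  · exact EReal.continuousOn_toReal.comp_continuous hφ (fun y => by simp [hbot, htop])
  · intro y z h
    exact hmono.injective ((EReal.toReal_eq_toReal (htop y) (hbot y) (htop z) (hbot z)).1 h)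
  · apply aux_tendsto_cocompact_real
    intro c
    obtain ⟨r, hrc⟩ := exists_rat_gt c
    obtain ⟨d, hd⟩ := hr (-r)
    obtain ⟨d', hd'⟩ := hr r
    filter_upwards [hl d d', hl' d] with y h1 h2
    by_cases h : d < y
    · have := hmono (h1.1 h)
      rw [hd', ← EReal.coe_toReal (htop y) (hbot y)] at this
      have : (r : ℝ) < (φ y).toReal := by exact_mod_cast this
      exact le_trans (by linarith) (le_abs_self _)
    · have := hmono (lt_of_le_of_ne (not_lt.1 h) h2)
      rw [hd, ← EReal.coe_toReal (htop y) (hbot y)] at this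
      have : (φ y).toReal < ((-r : ℚ) : ℝ) := by exact_mod_cast this
      push_cast at this
      exact le_trans (by linarith) (neg_le_abs _)

theorem aux_extend {M V : Type*} [TopologicalSpace M] [T1Space M] [TopologicalSpace V] [T2Space V]
    (p : M) (g : {x : M // x ≠ p} → V) (hg : Continuous g) (hinj : Function.Injective g)
    (hl : Tendsto g (comap Subtype.val (𝓝 p)) (cocompact V)) :
    ∃ f : M → OnePoint V, Continuous f ∧ Function.Injective f := by
  classical
  let f : M → OnePoint V := fun x => if h : x = p then OnePoint.infty else (g ⟨x, h⟩ : OnePoint V)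
  have hfp : f p = OnePoint.infty := by simp [f]
  have hfn : ∀ x : {x : M // x ≠ p}, f x = (g x : OnePoint V) := fun x => by simp [f, x.2]
  refine ⟨f, ?_, ?_⟩
  · rw [continuous_iff_continuousAt]
    intro x
    by_cases hx : x = p
    · subst hx
      rw [ContinuousAt, hfp]
      have h1 : Tendsto f (𝓝[≠] x) (𝓝 OnePoint.infty) := by
        have hmap : 𝓝[≠] x = map (Subtype.val : {y : M // y ≠ x} → M) (comap Subtype.val (𝓝 x)) := by
          rw [Filter.map_comap, nhdsWithin]
          congr 2
          ext y; simp
        rw [hmap, tendsto_map'_iff]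
        have : f ∘ (Subtype.val : {y : M // y ≠ x} → M) = fun y => (g y : OnePoint V) := by
          ext1 y; exact hfn y
        rw [this, OnePoint.nhds_infty_eq, Filter.coclosedCompact_eq_cocompact]
        exact (tendsto_map.comp hl).mono_right le_sup_left
      rw [← nhdsNE_sup_pure x]
      refine tendsto_sup.2 ⟨h1, ?_⟩
      rw [tendsto_pure_left]
      intro s hs; rw [hfp]; exact mem_of_mem_nhds hs
    · have ho : IsOpen {y : M | y ≠ p} := isOpen_ne
      have := (ho.isOpenEmbedding_subtypeVal).continuousAt_iff (g := f) (x := ⟨x, hx⟩)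
      apply this.1
      have : f ∘ (Subtype.val : {y : M // y ≠ p} → M) = fun y => (g y : OnePoint V) := by
        ext1 y; exact hfn y
      exact (this ▸ (OnePoint.continuous_coe.comp hg) :
        Continuous (f ∘ (Subtype.val : {y : M // y ≠ p} → M))).continuousAt
  · intro x y hxy
    by_cases hx : x = p <;> by_cases hy : y = p
    · rw [hx, hy]
    · exfalso
      rw [hx, hfp, hfn ⟨y, hy⟩] at hxy
      exact OnePoint.infty_ne_coe _ hxy
    · exfalso
      rw [hy, hfp, hfn ⟨x, hx⟩] at hxy
      exact OnePoint.coe_ne_infty _ hxy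
    · rw [hfn ⟨x, hx⟩, hfn ⟨y, hy⟩] at hxy
      have := hinj (OnePoint.coe_injective hxy)
      simpa using this

theorem aux_expand {ι : Type*} [Fintype ι] [DecidableEq ι] {d : ℕ}
    (F : MultilinearMap ℝ (fun _ : ι => (Fin d → ℝ)) ℝ) (x : ι → (Fin d → ℝ)) :
    F x = ∑ r : ι → Fin d, (∏ i, x i (r i)) * F (fun i => Pi.single (r i) 1) := by
  classical
  have h1 : x = fun i => ∑ j, x i j • (Pi.single j (1 : ℝ) : Fin d → ℝ) := by
    funext i
    exact pi_eq_sum_univ' (x i)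
  conv_lhs => rw [h1]
  rw [MultilinearMap.map_sum]
  refine Finset.sum_congr rfl fun r _ => ?_
  rw [MultilinearMap.map_smul_univ, smul_eq_mul]

theorem aux_mcont {ι : Type*} [Fintype ι] {d : ℕ}
    (F : MultilinearMap ℝ (fun _ : ι => (Fin d → ℝ)) ℝ) : Continuous F := by
  classical
  have : (F : (ι → (Fin d → ℝ)) → ℝ) = fun x => ∑ r : ι → Fin d, (∏ i, x i (r i)) * F (fun i => Pi.single (r i) 1) :=
    funext (aux_expand F)
  rw [this]
  fun_prop

/-- Compactness of normalized multilinear forms. -/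
theorem aux_compact {ι : Type*} [Fintype ι] {d : ℕ} (U : Ultrafilter ℕ)
    (F : ℕ → MultilinearMap ℝ (fun _ : ι => (Fin d → ℝ)) ℝ) (hF : ∀ n, F n ≠ 0) :
    ∃ (c : ℕ → ℝ) (A : MultilinearMap ℝ (fun _ : ι => (Fin d → ℝ)) ℝ), (∀ n, 0 < c n) ∧ A ≠ 0 ∧
      ∀ (x : ℕ → ι → (Fin d → ℝ)) (y : ι → (Fin d → ℝ)), Tendsto x U (𝓝 y) →
        Tendsto (fun n => F n (x n) / c n) U (𝓝 (A y)) := by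
  classical
  let φ : ℕ → (ι → Fin d) → ℝ := fun n r => F n (fun i => Pi.single (r i) 1)
  have hφ : ∀ n, φ n ≠ 0 := by
    intro n h
    apply hF n
    refine MultilinearMap.ext fun x => ?_
    rw [aux_expand, _root_.zero_apply]
    apply Finset.sum_eq_zero
    intro r _
    have : φ n r = 0 := by rw [h]; rfl
    change _ * φ n r = _
    rw [this, mul_zero]
  have hc : IsCompact (Metric.sphere (0 : (ι → Fin d) → ℝ) 1) := isCompact_sphere _ _
  have hmem : ∀ n, (‖φ n‖⁻¹ • φ n) ∈ Metric.sphere (0 : (ι → Fin d) → ℝ) 1 := by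
    intro n
    rw [mem_sphere_zero_iff_norm, norm_smul, norm_inv, norm_norm,
      inv_mul_cancel₀ (norm_ne_zero_iff.2 (hφ n))]
  obtain ⟨a, ha, hlim⟩ := hc.ultrafilter_le_nhds (U.map fun n => ‖φ n‖⁻¹ • φ n) (by
    rw [le_principal_iff]
    exact Filter.mem_map.2 (Filter.univ_mem' hmem))
  have hlim' : Tendsto (fun n => ‖φ n‖⁻¹ • φ n) U (𝓝 a) := hlim
  let A : MultilinearMap ℝ (fun _ : ι => (Fin d → ℝ)) ℝ :=
    ∑ r : ι → Fin d, a r • (MultilinearMap.mkPiAlgebra ℝ ι ℝ).compLinearMap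
      (fun i => LinearMap.proj (r i))
  have hA : ∀ x, A x = ∑ r : ι → Fin d, (∏ i, x i (r i)) * a r := by
    intro x
    simp only [A, _root_.sum_apply, _root_.smul_apply,
      MultilinearMap.compLinearMap_apply, MultilinearMap.mkPiAlgebra_apply, smul_eq_mul,
      LinearMap.proj_apply]
    exact Finset.sum_congr rfl fun r _ => mul_comm _ _
  refine ⟨fun n => ‖φ n‖, A, fun n => norm_pos_iff.2 (hφ n), ?_, ?_⟩
  · intro h
    have : a = 0 := by
      funext r
      have h1 := hA (fun i => Pi.single (r i) 1)
      rw [h, Finset.sum_eq_single r] at h1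
      · simpa using h1.symm
      · intro s _ hs
        obtain ⟨i, hi⟩ := Function.ne_iff.1 hs
        rw [Finset.prod_eq_zero (Finset.mem_univ i), zero_mul]
        rw [Pi.single_apply, if_neg hi]
      · simp
    rw [this] at ha
    simp at ha
  · intro x y hxy
    rw [hA]
    have : (fun n => F n (x n) / ‖φ n‖) = fun n => ∑ r : ι → Fin d, (∏ i, x n i (r i)) * (‖φ n‖⁻¹ • φ n) r := by
      funext n
      rw [aux_expand, Finset.sum_div]
      refine Finset.sum_congr rfl fun r _ => ?_
      rw [Pi.smul_apply, smul_eq_mul]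
      change _ * φ n r / _ = _
      field_simp
    rw [this]
    refine tendsto_finsetSum _ fun r _ => ?_
    refine Tendsto.mul (tendsto_finsetProd _ fun i _ => ?_) ((tendsto_pi_nhds.1 hlim') r)
    exact (tendsto_pi_nhds.1 ((tendsto_pi_nhds.1 hxy) i)) (r i)

/-- A multilinear form vanishing near a point vanishes. -/
theorem aux_mzero {ι : Type*} [Fintype ι] {d : ℕ}
    (B : MultilinearMap ℝ (fun _ : ι => (Fin d → ℝ)) ℝ) (x0 : ι → (Fin d → ℝ))
    (h : ∀ᶠ x in 𝓝 x0, B x = 0) (u : ι → (Fin d → ℝ)) : B u = 0 := by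
  classical
  have key : ∀ s : Finset ι, ∀ᶠ x in 𝓝 x0, ∀ u, B (s.piecewise u x) = 0 := by
    intro s
    induction s using Finset.induction_on with
    | empty => simpa using h
    | insert i s hi ih =>
      filter_upwards [eventually_eventually_nhds.2 ih] with x hx u
      have hcont : Tendsto (fun ε : ℝ => Function.update x i (x i + ε • (u i - x i))) (𝓝[≠] 0) (𝓝 x) := by
        have : Continuous (fun ε : ℝ => Function.update x i (x i + ε • (u i - x i))) := by fun_prop
        have h2 := this.tendsto 0
        simp only [zero_smul, add_zero, Function.update_eq_self] at h2
        exact h2.mono_left nhdsWithin_le_nhds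
      obtain ⟨ε, h1, h2⟩ := ((hcont.eventually hx).and self_mem_nhdsWithin).exists
      have h3 := h1 u
      have h4 := hx.self_of_nhds u
      rw [← Finset.update_piecewise_of_notMem _ _ _ hi, MultilinearMap.map_update_add,
        MultilinearMap.map_update_smul, MultilinearMap.map_update_sub] at h3
      have h5 : Function.update (s.piecewise u x) i (x i) = s.piecewise u x := by
        rw [Function.update_eq_self_iff]; simp [hi]
      rw [h5, h4, zero_add, sub_zero, smul_eq_mul] at h3
      rw [Finset.piecewise_insert]
      exact (mul_eq_zero.1 h3).resolve_left h2
  have := (key Finset.univ).self_of_nhds u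
  simpa using this

theorem aux_cramer {ι : Type*} [Fintype ι] [DecidableEq ι] {d : ℕ} (hd : Fintype.card ι = d)
    (Δ : (Fin d → ℝ) [⋀^ι]→ₗ[ℝ] ℝ) (x : ι → (Fin d → ℝ)) (hx : Δ x ≠ 0) (p : Fin d → ℝ) :
    p = ∑ i, (Δ (Function.update x i p) / Δ x) • x i := by
  have hli : LinearIndependent ℝ x := by
    by_contra h
    exact hx (Δ.map_linearDependent x h)
  let b := basisOfLinearIndependentOfCardEqFinrank' x hli (by simp [hd])
  have hb : ⇑b = x := coe_basisOfLinearIndependentOfCardEqFinrank' x hli _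
  have hp : p = ∑ j, b.repr p j • x j := by
    conv_lhs => rw [← b.sum_repr p]
    rw [hb]
  have hc : ∀ i, Δ (Function.update x i p) = b.repr p i * Δ x := by
    intro i
    conv_lhs => rw [hp, AlternatingMap.map_update_sum]
    rw [Finset.sum_eq_single i]
    · rw [AlternatingMap.map_update_smul, Function.update_eq_self, smul_eq_mul]
    · intro j _ hj
      rw [AlternatingMap.map_update_smul, AlternatingMap.map_update_self _ _ hj.symm, smul_zero]
    · simp
  conv_lhs => rw [hp]
  refine Finset.sum_congr rfl fun i _ => ?_
  rw [hc, mul_div_cancel_right₀ _ hx]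

theorem aux_cramer_sum {k m d : ℕ} (hd : k + m = d)
    (Δ : (Fin d → ℝ) [⋀^Fin k ⊕ Fin m]→ₗ[ℝ] ℝ) (u : Fin k → (Fin d → ℝ)) (t : Fin m → (Fin d → ℝ))
    (hx : Δ (Sum.elim u t) ≠ 0) (p : Fin d → ℝ) :
    p = ∑ i, (Δ (Sum.elim (Function.update u i p) t) / Δ (Sum.elim u t)) • u i +
      ∑ j, (Δ (Sum.elim u (Function.update t j p)) / Δ (Sum.elim u t)) • t j := by
  have := aux_cramer (by simp [hd]) Δ (Sum.elim u t) hx p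
  rw [Fintype.sum_sum_type] at this
  simpa only [Sum.update_elim_inl, Sum.update_elim_inr, Sum.elim_inl, Sum.elim_inr] using this

/-- Partial evaluation in the second block. -/
noncomputable def auxL {k m d : ℕ} (A : MultilinearMap ℝ (fun _ : Fin k ⊕ Fin m => (Fin d → ℝ)) ℝ)
    (t : Fin m → (Fin d → ℝ)) : MultilinearMap ℝ (fun _ : Fin k => (Fin d → ℝ)) ℝ where
  toFun u := A (Sum.elim u t)
  map_update_add' u i x y := by
    have := A.map_update_add (Sum.elim u t) (Sum.inl i) x y
    simp only [Sum.update_elim_inl] at this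
    convert this
  map_update_smul' u i c x := by
    have := A.map_update_smul (Sum.elim u t) (Sum.inl i) c x
    simp only [Sum.update_elim_inl] at this
    convert this

/-- Partial evaluation in the first block, alternating. -/
noncomputable def auxR {k m d : ℕ} (A : (Fin d → ℝ) [⋀^Fin k ⊕ Fin m]→ₗ[ℝ] ℝ)
    (u : Fin k → (Fin d → ℝ)) : (Fin d → ℝ) [⋀^Fin m]→ₗ[ℝ] ℝ where
  toFun t := A (Sum.elim u t)
  map_update_add' t i x y := by
    have := A.map_update_add (Sum.elim u t) (Sum.inr i) x y
    simp only [Sum.update_elim_inr] at this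
    convert this
  map_update_smul' t i c x := by
    have := A.map_update_smul (Sum.elim u t) (Sum.inr i) c x
    simp only [Sum.update_elim_inr] at this
    convert this
  map_eq_zero_of_eq' t i j h hij :=
    A.map_eq_zero_of_eq (Sum.elim u t) (i := Sum.inr i) (j := Sum.inr j) h (by simpa using hij)

/-- Partial evaluation in the second block, alternating. -/
noncomputable def auxLA {k m d : ℕ} (A : (Fin d → ℝ) [⋀^Fin k ⊕ Fin m]→ₗ[ℝ] ℝ)
    (t : Fin m → (Fin d → ℝ)) : (Fin d → ℝ) [⋀^Fin k]→ₗ[ℝ] ℝ where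
  toFun u := A (Sum.elim u t)
  map_update_add' u i x y := (auxL A.toMultilinearMap t).map_update_add u i x y
  map_update_smul' u i c x := (auxL A.toMultilinearMap t).map_update_smul u i c x
  map_eq_zero_of_eq' u i j h hij :=
    A.map_eq_zero_of_eq (Sum.elim u t) (i := Sum.inl i) (j := Sum.inl j) h (by simpa using hij)

theorem auxL_apply {k m d : ℕ} (A : MultilinearMap ℝ (fun _ : Fin k ⊕ Fin m => (Fin d → ℝ)) ℝ)
    (t : Fin m → (Fin d → ℝ)) (u) : auxL A t u = A (Sum.elim u t) := rfl
theorem auxR_apply {k m d : ℕ} (A : (Fin d → ℝ) [⋀^Fin k ⊕ Fin m]→ₗ[ℝ] ℝ)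
    (t : Fin m → (Fin d → ℝ)) (u) : auxR A u t = A (Sum.elim u t) := rfl
theorem auxLA_apply {k m d : ℕ} (A : (Fin d → ℝ) [⋀^Fin k ⊕ Fin m]→ₗ[ℝ] ℝ)
    (t : Fin m → (Fin d → ℝ)) (u) : auxLA A t u = A (Sum.elim u t) := rfl

theorem aux_vanish_r {k m d : ℕ} (A : (Fin d → ℝ) [⋀^Fin k ⊕ Fin m]→ₗ[ℝ] ℝ)
    (u : Fin k → (Fin d → ℝ)) (t : Fin m → (Fin d → ℝ)) (j : Fin m)
    (p : Fin d → ℝ) (hp : p ∈ Submodule.span ℝ (Set.range u)) :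
    A (Sum.elim u (Function.update t j p)) = 0 := by
  obtain ⟨c, rfl⟩ := (Submodule.mem_span_range_iff_exists_fun ℝ).1 hp
  rw [← auxR_apply, AlternatingMap.map_update_sum]
  refine Finset.sum_eq_zero fun i _ => ?_
  rw [AlternatingMap.map_update_smul, auxR_apply]
  rw [A.map_eq_zero_of_eq _ (i := Sum.inl i) (j := Sum.inr j) (by simp) (by simp), smul_zero]

theorem aux_vanish_l {k m d : ℕ} (A : (Fin d → ℝ) [⋀^Fin k ⊕ Fin m]→ₗ[ℝ] ℝ)
    (u : Fin k → (Fin d → ℝ)) (t : Fin m → (Fin d → ℝ)) (i : Fin k)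
    (p : Fin d → ℝ) (hp : p ∈ Submodule.span ℝ (Set.range t)) :
    A (Sum.elim (Function.update u i p) t) = 0 := by
  obtain ⟨c, rfl⟩ := (Submodule.mem_span_range_iff_exists_fun ℝ).1 hp
  rw [← auxLA_apply, AlternatingMap.map_update_sum]
  refine Finset.sum_eq_zero fun j _ => ?_
  rw [AlternatingMap.map_update_smul, auxLA_apply]
  rw [A.map_eq_zero_of_eq _ (i := Sum.inl i) (j := Sum.inr j) (by simp) (by simp), smul_zero]

theorem aux_disjoint {k m d : ℕ} (hd : k + m = d)
    (Δ : (Fin d → ℝ) [⋀^Fin k ⊕ Fin m]→ₗ[ℝ] ℝ) (u : Fin k → (Fin d → ℝ)) (t : Fin m → (Fin d → ℝ))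
    (hx : Δ (Sum.elim u t) ≠ 0) (p : Fin d → ℝ) (hp : p ∈ Submodule.span ℝ (Set.range u))
    (hp' : p ∈ Submodule.span ℝ (Set.range t)) : p = 0 := by
  refine (aux_cramer_sum hd Δ u t hx p).trans ?_
  simp only [aux_vanish_l Δ u t _ p hp', aux_vanish_r Δ u t _ p hp, zero_div, zero_smul,
    Finset.sum_const_zero, add_zero]

theorem aux_indep_l {k m d : ℕ} 
    (Δ : (Fin d → ℝ) [⋀^Fin k ⊕ Fin m]→ₗ[ℝ] ℝ) (u : Fin k → (Fin d → ℝ)) (t : Fin m → (Fin d → ℝ))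
    (hx : Δ (Sum.elim u t) ≠ 0) : LinearIndependent ℝ u := by
  by_contra h
  exact hx ((auxLA Δ t).map_linearDependent u h)

theorem aux_indep_r {k m d : ℕ} 
    (Δ : (Fin d → ℝ) [⋀^Fin k ⊕ Fin m]→ₗ[ℝ] ℝ) (u : Fin k → (Fin d → ℝ)) (t : Fin m → (Fin d → ℝ))
    (hx : Δ (Sum.elim u t) ≠ 0) : LinearIndependent ℝ t := by
  by_contra h
  exact hx ((auxR Δ u).map_linearDependent t h)

/-- If `w` lies in the span of the independent tuple `t`, the forms are proportional. -/
theorem aux_change {k m d : ℕ}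
    (Δ : (Fin d → ℝ) [⋀^Fin k ⊕ Fin m]→ₗ[ℝ] ℝ) (t w : Fin m → (Fin d → ℝ))
    (ht : LinearIndependent ℝ t) (hw : ∀ j, w j ∈ Submodule.span ℝ (Set.range t)) :
    ∃ c : ℝ, ∀ u, Δ (Sum.elim u w) = c * Δ (Sum.elim u t) := by
  let b := Module.Basis.span ht
  let w' : Fin m → Submodule.span ℝ (Set.range t) := fun j => ⟨w j, hw j⟩
  refine ⟨b.det w', fun u => ?_⟩
  have h := AlternatingMap.eq_smul_basis_det b
    ((auxR Δ u).compLinearMap (Submodule.span ℝ (Set.range t)).subtype)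
  have h1 := congrArg (fun f => f w') h
  have hb : ∀ j, (b j : Fin d → ℝ) = t j := fun j => by simp [b, Module.Basis.span_apply]
  simp only [AlternatingMap.compLinearMap_apply, AlternatingMap.smul_apply, smul_eq_mul,
    auxR_apply] at h1
  have e2 : (fun i => (Submodule.span ℝ (Set.range t)).subtype (b i)) = t := funext hb
  have e1 : (fun i => (Submodule.span ℝ (Set.range t)).subtype (w' i)) = w := rfl
  rw [mul_comm]
  simpa [auxR_apply, Function.comp_def, hb, w'] using h1

theorem aux_swap {k d : ℕ} (Δ : (Fin d → ℝ) [⋀^Fin k ⊕ Fin (k+1)]→ₗ[ℝ] ℝ)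
    (v v' : Fin k → (Fin d → ℝ)) (e : Fin d → ℝ) :
    Δ (Sum.elim v (Fin.cons e v' : Fin (k+1) → (Fin d → ℝ))) = (-1) ^ k * Δ (Sum.elim v' (Fin.cons e v : Fin (k+1) → (Fin d → ℝ))) := by
  classical
  have key : ∀ s : Finset (Fin k), Δ (Sum.elim v (Fin.cons e v' : Fin (k+1) → (Fin d → ℝ))) =
      (-1) ^ s.card * Δ (Sum.elim (s.piecewise v' v) (Fin.cons e (s.piecewise v v') : Fin (k+1) → (Fin d → ℝ))) := by
    intro s
    induction s using Finset.induction_on with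
    | empty => simp
    | insert i s hi ih =>
      rw [ih, Finset.card_insert_of_notMem hi, pow_succ]
      have h := Δ.map_swap (Sum.elim (s.piecewise v' v) (Fin.cons e (s.piecewise v v') : Fin (k+1) → (Fin d → ℝ)))
        (i := Sum.inl i) (j := Sum.inr i.succ) (by simp)
      have h2 : (Sum.elim (s.piecewise v' v) (Fin.cons e (s.piecewise v v') : Fin (k+1) → (Fin d → ℝ))) ∘
          (Equiv.swap (Sum.inl i : Fin k ⊕ Fin (k+1)) (Sum.inr i.succ)) =
          Sum.elim ((insert i s).piecewise v' v) (Fin.cons e ((insert i s).piecewise v v') : Fin (k+1) → (Fin d → ℝ)) := by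
        funext a
        rcases a with a | a
        · by_cases ha : a = i
          · subst ha; simp [hi]
          · rw [Function.comp, Equiv.swap_apply_of_ne_of_ne (by simpa using ha) (by simp)]
            simp [Finset.piecewise, ha]
        · refine Fin.cases ?_ (fun a => ?_) a
          · rw [Function.comp, Equiv.swap_apply_of_ne_of_ne (by simp) (by simpa using (Fin.succ_ne_zero i).symm)]
            simp
          · by_cases ha : a = i
            · subst ha; simp [hi]
            · rw [Function.comp, Equiv.swap_apply_of_ne_of_ne (by simp) (by simpa using ha)]
              simp [Finset.piecewise, ha]
      rw [← h2, h]; ring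
  simpa using key Finset.univ

theorem aux_two_others {M : Type*} [TopologicalSpace M] [T1Space M]
    (hp : ∀ x : M, Filter.NeBot (𝓝[≠] x)) (s : Finset M) (x : M) : ∃ y, y ≠ x ∧ y ∉ s := by
  classical
  have h1 := infinite_of_mem_nhds x (univ_mem : Set.univ ∈ 𝓝 x)
  obtain ⟨y, hy⟩ := (h1.exists_notMem_finset (insert x s))
  simp only [Finset.mem_insert, not_or] at hy
  exact ⟨y, hy.2.1, hy.2.2⟩

theorem aux_dyn {Γ M : Type} [Group Γ] [TopologicalSpace M] [MulAction Γ M]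
    [CompactSpace M] [T2Space M] (hp : ∀ x : M, Filter.NeBot (𝓝[≠] x))
    (hconv : IsConvergenceAction Γ M) (x : M) (hx : IsConicalLimitPoint Γ x) :
    ∃ a b : M, a ≠ b ∧ ∃ g : ℕ → Γ, Tendsto (fun n => g n • x) atTop (𝓝 a) ∧
      (∀ y, y ≠ x → Tendsto (fun n => g n • y) atTop (𝓝 b)) ∧
      (∀ z, z ≠ b → Tendsto (fun n => (g n)⁻¹ • z) atTop (𝓝 x)) := by
  classical
  obtain ⟨a, b, hab, g, hgx, hgy⟩ := hx
  have hfib : ∀ γ : Γ, ∀ᶠ n in atTop, g n ≠ γ := by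
    intro γ
    by_contra hcon
    have hfr : ∃ᶠ n in atTop, g n = γ := by
      intro h; exact hcon h
    have hb : ∀ y, y ≠ x → γ • y = b := by
      intro y hy
      by_contra hne
      have := (hgy y hy).eventually (isOpen_ne.mem_nhds (Ne.symm hne) : {z | z ≠ γ • y} ∈ 𝓝 b)
      obtain ⟨n, h1, h2⟩ := (hfr.and_eventually this).exists
      exact h2 (by rw [h1])
    obtain ⟨y1, h1, _⟩ := aux_two_others hp ∅ x
    obtain ⟨y2, h2, h3⟩ := aux_two_others hp {y1} x
    have : γ • y2 = γ • y1 := by rw [hb _ h1, hb _ h2]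
    exact h3 (by simpa using (MulAction.injective γ this))
  obtain ⟨φ, -, hφ⟩ := exists_seq_of_forall_finset_exists (fun _ : ℕ => True)
    (fun m n => m < n ∧ g m ≠ g n) (by
      intro s _
      have : ∀ᶠ n in atTop, ∀ m ∈ s, m < n ∧ g m ≠ g n := by
        rw [Filter.eventually_all_finset]
        intro m _
        filter_upwards [hfib (g m), eventually_gt_atTop m] with n h1 h2
        exact ⟨h2, h1.symm⟩
      obtain ⟨n, hn⟩ := this.exists
      exact ⟨n, trivial, hn⟩)
  have hφm : StrictMono φ := fun m n h => (hφ m n h).1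
  have hinj : Function.Injective (fun n => g (φ n)) := by
    intro m n h
    rcases lt_trichotomy m n with h1 | h1 | h1
    · exact absurd h (hφ m n h1).2
    · exact h1
    · exact absurd h.symm (hφ n m h1).2
  obtain ⟨ψ, hψ, a', b', hcl⟩ := hconv.2 _ hinj
  have ht : Tendsto (fun n => φ (ψ n)) atTop atTop := (hφm.comp hψ).tendsto_atTop
  have hptw : ∀ z, z ≠ b' → Tendsto (fun n => g (φ (ψ n)) • z) atTop (𝓝 a') := by
    intro z hz U hU
    exact (hcl {z} isCompact_singleton (by simpa using hz.symm) U hU).mono (fun n hn => hn z rfl)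
  obtain ⟨y, hy, hy'⟩ := aux_two_others hp {b'} x
  have ha' : a' = b := tendsto_nhds_unique (hptw y (by simpa using hy')) ((hgy y hy).comp ht)
  have hb' : b' = x := by
    by_contra h
    have := tendsto_nhds_unique (hptw x (Ne.symm h)) (hgx.comp ht)
    exact hab (this ▸ ha')
  subst ha' hb'
  refine ⟨a, a', hab, fun n => g (φ (ψ n)), hgx.comp ht, fun y hy => (hgy y hy).comp ht, ?_⟩
  intro z hz
  rw [tendsto_nhds]
  intro U hU hxU
  have := hcl Uᶜ hU.isClosed_compl.isCompact (by simpa using hxU) {y | y ≠ z}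
    (isOpen_ne.mem_nhds hz.symm)
  filter_upwards [this] with n hn
  by_contra hc
  exact hn _ hc (smul_inv_smul _ _)

theorem aux_qmem {k m d : ℕ} (hd : k + m = d)
    (Δ : (Fin d → ℝ) [⋀^Fin k ⊕ Fin m]→ₗ[ℝ] ℝ) (u : Fin k → (Fin d → ℝ)) (t : Fin m → (Fin d → ℝ))
    (hx : Δ (Sum.elim u t) ≠ 0) (p : Fin d → ℝ) :
    p - ∑ j, (Δ (Sum.elim u (Function.update t j p)) / Δ (Sum.elim u t)) • t j ∈
      Submodule.span ℝ (Set.range u) := by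
  have h := aux_cramer_sum hd Δ u t hx p
  rw [sub_eq_of_eq_add h]
  exact Submodule.sum_mem _ fun i _ => Submodule.smul_mem _ _ (Submodule.subset_span ⟨i, rfl⟩)

theorem aux_qmem' {k m d : ℕ} (hd : k + m = d)
    (Δ : (Fin d → ℝ) [⋀^Fin k ⊕ Fin m]→ₗ[ℝ] ℝ) (u : Fin k → (Fin d → ℝ)) (t : Fin m → (Fin d → ℝ))
    (hx : Δ (Sum.elim u t) ≠ 0) (p : Fin d → ℝ) :
    p - ∑ i, (Δ (Sum.elim (Function.update u i p) t) / Δ (Sum.elim u t)) • u i ∈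
      Submodule.span ℝ (Set.range t) := by
  have h := aux_cramer_sum hd Δ u t hx p
  rw [sub_eq_of_eq_add' h]
  exact Submodule.sum_mem _ fun i _ => Submodule.smul_mem _ _ (Submodule.subset_span ⟨i, rfl⟩)

theorem aux_shift {k d : ℕ} (B : MultilinearMap ℝ (fun _ : Fin k => (Fin d → ℝ)) ℝ)
    (P : Submodule ℝ (Fin d → ℝ)) (hB : ∀ u i p, p ∈ P → B (Function.update u i p) = 0)
    (u s : Fin k → (Fin d → ℝ)) (h : ∀ i, u i - s i ∈ P) : B s = B u := by
  have key : ∀ S : Finset (Fin k), B (S.piecewise s u) = B u := by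
    intro S
    induction S using Finset.induction_on with
    | empty => simp
    | insert i S hi ih =>
      rw [Finset.piecewise_insert, ← ih]
      have h1 : S.piecewise s u = Function.update (S.piecewise s u) i ((u i - s i) + s i) := by
        rw [sub_add_cancel, eq_comm, Function.update_eq_self_iff]; simp [hi]
      conv_rhs => rw [h1, MultilinearMap.map_update_add, hB _ _ _ (h i), zero_add]
  simpa using key Finset.univ

structure AuxData {Γ M : Type} [Group Γ] [TopologicalSpace M] [MulAction Γ M] (k : ℕ)
    (Δ : (Fin (2 * k + 1) → ℝ) [⋀^Fin k ⊕ Fin (k + 1)]→ₗ[ℝ] ℝ)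
    (G : Γ → (Fin (2 * k + 1) → ℝ) →ₗ[ℝ] (Fin (2 * k + 1) → ℝ))
    (v : M → Fin k → (Fin (2 * k + 1) → ℝ)) (w : M → Fin (k + 1) → (Fin (2 * k + 1) → ℝ)) :
    Prop where
  inv : ∀ γ p, G γ⁻¹ (G γ p) = p
  trans : ∀ x y, x ≠ y → Δ (Sum.elim (v x) (w y)) ≠ 0
  contv : ∀ x t t0, Δ (Sum.elim (v x) t0) ≠ 0 →
    Tendsto (fun y => Δ (Sum.elim (v y) t) / Δ (Sum.elim (v y) t0)) (𝓝 x)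
      (𝓝 (Δ (Sum.elim (v x) t) / Δ (Sum.elim (v x) t0)))
  contw : ∀ x u u0, Δ (Sum.elim u0 (w x)) ≠ 0 →
    Tendsto (fun y => Δ (Sum.elim u (w y)) / Δ (Sum.elim u0 (w y))) (𝓝 x)
      (𝓝 (Δ (Sum.elim u (w x)) / Δ (Sum.elim u0 (w x))))
  equiw : ∀ γ x p, p ∈ Submodule.span ℝ (Set.range (w (γ • x))) →
    G γ⁻¹ p ∈ Submodule.span ℝ (Set.range (w x))
  dyn : ∀ (g : ℕ → Γ) (x y : M),
      (∀ z : M, z ≠ y → Tendsto (fun n => g n • z) atTop (𝓝 x)) →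
      (∀ z : M, z ≠ x → Tendsto (fun n => (g n)⁻¹ • z) atTop (𝓝 y)) →
      ∀ u, Δ (Sum.elim u (w y)) ≠ 0 → ∀ t t0, Δ (Sum.elim (v x) t0) ≠ 0 →
      Tendsto (fun n => Δ (Sum.elim (fun i => G (g n) (u i)) t) /
        Δ (Sum.elim (fun i => G (g n) (u i)) t0)) atTop
        (𝓝 (Δ (Sum.elim (v x) t) / Δ (Sum.elim (v x) t0)))

/-- If the self-ratio converges to a self-ratio which is one then denominators are nonzero. -/
theorem aux_ev_ne {α : Type*} {l : Filter α} (f : α → ℝ) (c : ℝ) (hc : c ≠ 0)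
    (h : Tendsto (fun y => f y / f y) l (𝓝 (c / c))) : ∀ᶠ y in l, f y ≠ 0 := by
  rw [div_self hc] at h
  filter_upwards [h.eventually (isOpen_ne.mem_nhds (one_ne_zero) : {z : ℝ | z ≠ 0} ∈ 𝓝 1)] with y hy h0
  exact hy (by rw [h0, div_zero])

theorem aux_update_comp {k : ℕ} {E : Type*} (h : E → E) (u : Fin k → E) (i : Fin k) (q : E) :
    (fun l => h (Function.update u i q l)) = Function.update (fun l => h (u l)) i (h q) := by
  funext l
  by_cases hl : l = i
  · subst hl; simp
  · simp [hl]

theorem aux_sub_tendsto {α : Type*} {l : Filter α} {m d : ℕ} (c : α → Fin m → ℝ)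
    (t : Fin m → (Fin d → ℝ)) (p : Fin d → ℝ) (h : ∀ j, Tendsto (fun n => c n j) l (𝓝 0)) :
    Tendsto (fun n => p - ∑ j, c n j • t j) l (𝓝 p) := by
  have : Tendsto (fun n => p - ∑ j, c n j • t j) l (𝓝 (p - ∑ j, (0 : ℝ) • t j)) :=
    tendsto_const_nhds.sub (tendsto_finsetSum _ fun j _ => (h j).smul tendsto_const_nhds)
  simpa using this

theorem aux_exists_common {k d : ℕ} (Δ : (Fin d → ℝ) [⋀^Fin k ⊕ Fin (k+1)]→ₗ[ℝ] ℝ)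
    (t t' : Fin (k+1) → (Fin d → ℝ)) (u u' : Fin k → (Fin d → ℝ))
    (h : Δ (Sum.elim u t) ≠ 0) (h' : Δ (Sum.elim u' t') ≠ 0) :
    ∃ u, Δ (Sum.elim u t) ≠ 0 ∧ Δ (Sum.elim u t') ≠ 0 := by
  by_contra hcon
  push Not at hcon
  refine h' (aux_mzero (auxL Δ.toMultilinearMap t') u ?_ u')
  have hc := aux_mcont (auxL Δ.toMultilinearMap t)
  filter_upwards [hc.continuousAt.eventually_ne h] with u hu
  exact hcon u hu

theorem aux_nested {Γ M : Type} [Group Γ] [TopologicalSpace M] [MulAction Γ M] 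
    [CompactSpace M] [T2Space M] (hp : ∀ x : M, Filter.NeBot (𝓝[≠] x))
    (hconv : IsConvergenceAction Γ M) {k : ℕ}
    {Δ : (Fin (2 * k + 1) → ℝ) [⋀^Fin k ⊕ Fin (k + 1)]→ₗ[ℝ] ℝ}
    {G : Γ → (Fin (2 * k + 1) → ℝ) →ₗ[ℝ] (Fin (2 * k + 1) → ℝ)}
    {v : M → Fin k → (Fin (2 * k + 1) → ℝ)} {w : M → Fin (k + 1) → (Fin (2 * k + 1) → ℝ)}
    (hA : AuxData k Δ G v w) (x : M) (hx : IsConicalLimitPoint Γ x) (i0 : Fin k) :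
    v x i0 ∈ Submodule.span ℝ (Set.range (w x)) := by
  classical
  have hd : k + (k + 1) = 2 * k + 1 := by ring
  obtain ⟨a, b, hab, γ, hγx, hγy, hγi⟩ := aux_dyn hp hconv x hx
  obtain ⟨y, hyx, -⟩ := aux_two_others hp ∅ x
  let U : Ultrafilter ℕ := hyperfilter ℕ
  have hU : (U : Filter ℕ) ≤ atTop := Nat.hyperfilter_le_atTop
  let g : ℕ → (Fin (2 * k + 1) → ℝ) →ₗ[ℝ] (Fin (2 * k + 1) → ℝ) := fun n => G (γ n)
  let h : ℕ → (Fin (2 * k + 1) → ℝ) →ₗ[ℝ] (Fin (2 * k + 1) → ℝ) := fun n => G (γ n)⁻¹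
  have hhg : ∀ n p, h n (g n p) = p := fun n p => hA.inv (γ n) p
  have hgh : ∀ n p, g n (h n p) = p := fun n p => by
    have := hA.inv (γ n)⁻¹ p
    rwa [inv_inv] at this
  let t0 := w y
  have ht0 : Δ (Sum.elim (v x) t0) ≠ 0 := hA.trans x y hyx.symm
  let F : ℕ → MultilinearMap ℝ (fun _ : Fin k ⊕ Fin (k + 1) => (Fin (2 * k + 1) → ℝ)) ℝ := fun n =>
    Δ.toMultilinearMap.compLinearMap (Sum.elim (fun _ => h n) (fun _ => LinearMap.id))
  have hF : ∀ n u t, F n (Sum.elim u t) = Δ (Sum.elim (fun i => h n (u i)) t) := by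
    intro n u t
    simp only [F, MultilinearMap.compLinearMap_apply]
    change Δ _ = Δ _
    congr 1
    funext i
    rcases i with i | i <;> rfl
  have hF0 : ∀ n, F n ≠ 0 := by
    intro n hn
    apply ht0
    have := hF n (fun i => g n (v x i)) t0
    rw [hn] at this
    simp only [hhg] at this
    exact this.symm
  obtain ⟨c, A, hc, hA0, hlim⟩ := aux_compact U F hF0
  let r : (Fin (k + 1) → (Fin (2 * k + 1) → ℝ)) → ℝ := fun t =>
    Δ (Sum.elim (v x) t) / Δ (Sum.elim (v x) t0)
  -- Step 1
  have step1a : ∀ u t, Δ (Sum.elim u (w b)) ≠ 0 → A (Sum.elim u t) = r t * A (Sum.elim u t0) := by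
    intro u t hu
    have hdy := fun t => (hA.dyn (fun n => (γ n)⁻¹) x b hγi
      (by simpa using hγy) u hu t t0 ht0).mono_left hU
    have hne := aux_ev_ne _ _ ht0 (hdy t0)
    have l1 := hlim (fun _ => Sum.elim u t) _ tendsto_const_nhds
    have l2 := hlim (fun _ => Sum.elim u t0) _ tendsto_const_nhds
    have l3 := (hdy t).mul l2
    refine tendsto_nhds_unique l1 (l3.congr' ?_)
    filter_upwards [hne] with n hn
    rw [hF, hF]
    change Δ (Sum.elim (fun i => h n (u i)) t) / Δ (Sum.elim (fun i => h n (u i)) t0) * _ = _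
    have hn' : Δ (Sum.elim (fun i => h n (u i)) t0) ≠ 0 := hn
    field_simp
  have step1 : ∀ u t, A (Sum.elim u t) = r t * A (Sum.elim u t0) := by
    intro u t
    have := aux_mzero (auxL A t - r t • auxL A t0) (v a) (by
      have hcc := aux_mcont (auxL Δ.toMultilinearMap (w b))
      filter_upwards [hcc.continuousAt.eventually_ne (hA.trans a b hab)] with u hu
      change A (Sum.elim u t) - r t * A (Sum.elim u t0) = 0
      rw [step1a u t hu, sub_self]) u
    change A (Sum.elim u t) - r t * A (Sum.elim u t0) = 0 at this
    linarith
  obtain ⟨us, hus⟩ : ∃ u, A (Sum.elim u t0) ≠ 0 := by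
    by_contra hcon
    push Not at hcon
    apply hA0
    refine MultilinearMap.ext fun z => ?_
    rw [← Sum.elim_comp_inl_inr z, step1, hcon, mul_zero]; rfl
  -- Step 2
  let t' : Fin (k + 1) → (Fin (2 * k + 1) → ℝ) := Fin.cons (w y 0) (v x)
  obtain ⟨v', hv', hv''⟩ : ∃ v', Δ (Sum.elim v' (w x)) ≠ 0 ∧ Δ (Sum.elim v' t') ≠ 0 := by
    refine aux_exists_common Δ (w x) t' (v y) (Fin.tail (w y)) (hA.trans y x hyx) ?_
    have h1 := aux_swap Δ (v x) (Fin.tail (w y)) (w y 0)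
    rw [Fin.cons_self_tail] at h1
    intro h2
    apply ht0
    rw [h1]
    change _ * Δ (Sum.elim (Fin.tail (w y)) t') = 0
    rw [h2, mul_zero]
  have step2 : ∀ u i p, p ∈ Submodule.span ℝ (Set.range (v b)) →
      A (Sum.elim (Function.update u i p) t0) = 0 := by
    intro u i p hpb
    by_contra hne
    have hba : Δ (Sum.elim (v b) (w a)) ≠ 0 := hA.trans b a hab.symm
    have hdy := fun t => (hA.dyn γ b x hγy hγi v' hv' t (w a) hba).mono_left hU
    have hne1 := aux_ev_ne _ _ hba (hdy (w a))
    let q : ℕ → (Fin (2 * k + 1) → ℝ) := fun n =>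
      p - ∑ j, (Δ (Sum.elim (fun i => g n (v' i)) (Function.update (w a) j p)) /
        Δ (Sum.elim (fun i => g n (v' i)) (w a))) • w a j
    have hq : Tendsto q U (𝓝 p) := by
      refine aux_sub_tendsto _ _ _ fun j => ?_
      have := hdy (Function.update (w a) j p)
      rwa [aux_vanish_r Δ _ _ _ _ hpb, zero_div] at this
    have hp0 : p ≠ 0 := by
      rintro rfl
      apply hne
      exact (auxL A t0).map_update_zero u i
    have hq0 : ∀ᶠ n in (U : Filter ℕ), q n ≠ 0 := hq.eventually_ne hp0
    have hqs : ∀ᶠ n in (U : Filter ℕ), h n (q n) ∈ Submodule.span ℝ (Set.range v') := by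
      filter_upwards [hne1] with n hn
      have h1 := aux_qmem hd Δ (fun i => g n (v' i)) (w a) hn p
      have h2 := Submodule.mem_map_of_mem (f := h n) h1
      rw [Submodule.map_span, ← Set.range_comp] at h2
      have h3 : (h n) ∘ (fun i => g n (v' i)) = v' := funext fun i => hhg n _
      rw [h3] at h2
      exact h2
    have hh0 : ∀ᶠ n in (U : Filter ℕ), h n (q n) ≠ 0 := by
      filter_upwards [hq0] with n hn h0
      apply hn
      rw [← hgh n (q n), h0, map_zero]
    let rr : ℕ → (Fin (2 * k + 1) → ℝ) := fun n => ‖h n (q n)‖⁻¹ • h n (q n)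
    have hrs : ∀ᶠ n in (U : Filter ℕ), rr n ∈ Metric.sphere (0 : Fin (2 * k + 1) → ℝ) 1 := by
      filter_upwards [hh0] with n hn
      rw [mem_sphere_zero_iff_norm, norm_smul, norm_inv, norm_norm,
        inv_mul_cancel₀ (norm_ne_zero_iff.2 hn)]
    obtain ⟨r1, hr1, hrl⟩ := (isCompact_sphere (0 : Fin (2 * k + 1) → ℝ) 1).ultrafilter_le_nhds
      (U.map rr) (le_principal_iff.2 hrs)
    have hrl' : Tendsto rr U (𝓝 r1) := hrl
    have hr1s : r1 ∈ Submodule.span ℝ (Set.range v') := by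
      have hcl := (Submodule.span ℝ (Set.range v')).closed_of_finiteDimensional
      refine hcl.mem_of_tendsto hrl' ?_
      filter_upwards [hqs] with n hn
      exact Submodule.smul_mem _ _ hn
    have hzero : ∀ t j, A (Sum.elim (Function.update u i p) (Function.update t j r1)) = 0 := by
      intro t j
      have l1 := hlim (fun n => Sum.elim (Function.update u i (q n)) (Function.update t j (rr n)))
        (Sum.elim (Function.update u i p) (Function.update t j r1)) (by
          rw [tendsto_pi_nhds]
          rintro (l | l)
          · exact (tendsto_pi_nhds.1 (tendsto_const_nhds.update i hq)) l
          · exact (tendsto_pi_nhds.1 (tendsto_const_nhds.update j hrl')) l)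
      refine tendsto_nhds_unique l1 (tendsto_const_nhds.congr fun n => ?_)
      rw [hF, aux_update_comp, aux_vanish_r, zero_div]
      refine Submodule.smul_mem _ _ (Submodule.subset_span ⟨i, ?_⟩)
      simp
    have hzero' : ∀ j, Δ (Sum.elim (v x) (Function.update t0 j r1)) = 0 := by
      intro j
      have h1 := hzero t0 j
      rw [step1] at h1
      have h2 := (mul_eq_zero.1 h1).resolve_right hne
      exact (div_eq_zero_iff.1 h2).resolve_right ht0
    have hr1x : r1 ∈ Submodule.span ℝ (Set.range (v x)) := by
      have h1 := aux_qmem hd Δ (v x) t0 ht0 r1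
      simp only [hzero', zero_div, zero_smul, Finset.sum_const_zero, sub_zero] at h1
      exact h1
    have hr1t : r1 ∈ Submodule.span ℝ (Set.range t') := by
      refine Submodule.span_mono ?_ hr1x
      rintro _ ⟨i, rfl⟩
      exact ⟨i.succ, by simp [t']⟩
    have := aux_disjoint hd Δ v' t' hv'' r1 hr1s hr1t
    rw [this] at hr1
    simp at hr1
  -- Step 3
  have hba : Δ (Sum.elim (v b) (w a)) ≠ 0 := hA.trans b a hab.symm
  let s : Fin k → (Fin (2 * k + 1) → ℝ) := fun i =>
    us i - ∑ l, (Δ (Sum.elim (Function.update (v b) l (us i)) (w a)) / Δ (Sum.elim (v b) (w a))) • v b l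
  have hsW : ∀ i, s i ∈ Submodule.span ℝ (Set.range (w a)) := fun i =>
    aux_qmem' hd Δ (v b) (w a) hba (us i)
  have hs : A (Sum.elim s t0) ≠ 0 := by
    have := aux_shift (auxL A t0) (Submodule.span ℝ (Set.range (v b))) step2 us s (by
      intro i
      simp only [s, sub_sub_cancel]
      exact Submodule.sum_mem _ fun i _ => Submodule.smul_mem _ _ (Submodule.subset_span ⟨i, rfl⟩))
    rw [← auxL_apply, this]
    exact hus
  have hγx' : Tendsto (fun n => γ n • x) U (𝓝 a) := hγx.mono_left hU
  have hcw := fun u => (hA.contw a u (v b) hba).comp hγx'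
  have hne3 := aux_ev_ne _ _ hba (hcw (v b))
  let sn : ℕ → Fin k → (Fin (2 * k + 1) → ℝ) := fun n i =>
    s i - ∑ l, (Δ (Sum.elim (Function.update (v b) l (s i)) (w (γ n • x))) /
      Δ (Sum.elim (v b) (w (γ n • x)))) • v b l
  have hsn : Tendsto sn U (𝓝 s) := by
    rw [tendsto_pi_nhds]
    intro i
    refine aux_sub_tendsto _ _ _ fun l => ?_
    have := hcw (Function.update (v b) l (s i))
    rwa [aux_vanish_l Δ _ _ _ _ (hsW i), zero_div] at this
  have hsnW : ∀ᶠ n in (U : Filter ℕ), ∀ i, h n (sn n i) ∈ Submodule.span ℝ (Set.range (w x)) := by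
    filter_upwards [hne3] with n hn i
    exact hA.equiw _ _ _ (aux_qmem' hd Δ (v b) (w (γ n • x)) hn (s i))
  have hl3 : ∀ t, Tendsto (fun n => F n (Sum.elim (sn n) t) / c n) U (𝓝 (A (Sum.elim s t))) := by
    intro t
    apply hlim
    rw [tendsto_pi_nhds]
    rintro (l | l)
    · exact (tendsto_pi_nhds.1 hsn) l
    · exact tendsto_const_nhds
  have hne4 : ∀ᶠ n in (U : Filter ℕ), Δ (Sum.elim (fun i => h n (sn n i)) t0) ≠ 0 := by
    filter_upwards [(hl3 t0).eventually_ne hs] with n hn h0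
    apply hn
    rw [hF, h0, zero_div]
  have hl4 : ∀ t, Tendsto (fun n => Δ (Sum.elim (fun i => h n (sn n i)) t) /
      Δ (Sum.elim (fun i => h n (sn n i)) t0)) U (𝓝 (r t)) := by
    intro t
    have h1 := (hl3 t).div (hl3 t0) hs
    rw [step1 s t, mul_div_cancel_right₀ _ hs] at h1
    refine h1.congr fun n => ?_
    rw [Pi.div_apply, hF, hF, div_div_div_cancel_right₀ (hc n).ne']
  let p := v x i0
  have hpP : p ∈ Submodule.span ℝ (Set.range (v x)) := Submodule.subset_span ⟨i0, rfl⟩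
  have hq : Tendsto (fun n => p - ∑ j, (Δ (Sum.elim (fun i => h n (sn n i)) (Function.update t0 j p)) /
      Δ (Sum.elim (fun i => h n (sn n i)) t0)) • t0 j) U (𝓝 p) := by
    refine aux_sub_tendsto _ _ _ fun j => ?_
    have := hl4 (Function.update t0 j p)
    simp only [r] at this
    rwa [aux_vanish_r Δ _ _ _ _ hpP, zero_div] at this
  refine (Submodule.span ℝ (Set.range (w x))).closed_of_finiteDimensional.mem_of_tendsto hq ?_
  filter_upwards [hne4, hsnW] with n h1 h2
  refine Submodule.span_le.2 ?_ (aux_qmem hd Δ _ _ h1 p)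
  rintro _ ⟨i, rfl⟩
  exact h2 i

theorem aux_to_sphere {M : Type*} [TopologicalSpace M] [T1Space M] (k : ℕ)
    (p : M) (g : {x : M // x ≠ p} → EuclideanSpace ℝ (Fin k)) (hg : Continuous g)
    (hinj : Function.Injective g)
    (hl : Tendsto g (comap Subtype.val (𝓝 p)) (cocompact (EuclideanSpace ℝ (Fin k)))) :
    ∃ f : M → Metric.sphere (0 : EuclideanSpace ℝ (Fin (k + 1))) 1,
      Continuous f ∧ Function.Injective f := by
  obtain ⟨f, hf, hi⟩ := aux_extend p g hg hinj hl
  let e := onePointEquivSphereOfFinrankEq (ι := Fin (k+1)) (V := EuclideanSpace ℝ (Fin k)) (by simp)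
  exact ⟨e ∘ f, e.continuous.comp hf, e.injective.comp hi⟩

theorem aux_head_sum {k d : ℕ} (Δ : (Fin d → ℝ) [⋀^Fin k ⊕ Fin (k+1)]→ₗ[ℝ] ℝ)
    (u z : Fin k → (Fin d → ℝ)) (e : Fin d → ℝ) (α : Fin k → ℝ) (f : Fin k → (Fin d → ℝ)) :
    Δ (Sum.elim u (Fin.cons (e + ∑ i, α i • f i) z : Fin (k+1) → (Fin d → ℝ))) =
      Δ (Sum.elim u (Fin.cons e z : Fin (k+1) → (Fin d → ℝ))) +
      ∑ i, α i * Δ (Sum.elim u (Fin.cons (f i) z : Fin (k+1) → (Fin d → ℝ))) := by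
  have h : ∀ e, Δ (Sum.elim u (Fin.cons e z : Fin (k+1) → (Fin d → ℝ))) =
      (auxR Δ u).toMultilinearMap.toLinearMap (Fin.cons 0 z : Fin (k+1) → (Fin d → ℝ)) 0 e := by
    intro e
    rw [MultilinearMap.toLinearMap_apply, Fin.update_cons_zero]
    rfl
  simp only [h, map_add, map_sum, map_smul, smul_eq_mul]

/-- Lifting `w` to `cons e v`. -/
theorem aux_lift {k : ℕ} (Δ : (Fin (2*k+1) → ℝ) [⋀^Fin k ⊕ Fin (k+1)]→ₗ[ℝ] ℝ)
    (v u0 : Fin k → (Fin (2*k+1) → ℝ)) (w : Fin (k+1) → (Fin (2*k+1) → ℝ)) (hv : LinearIndependent ℝ v)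
    (hw : Δ (Sum.elim u0 w) ≠ 0) (hvw : ∀ i, v i ∈ Submodule.span ℝ (Set.range w))
    (e : Fin (2*k+1) → ℝ) (he : e ∈ Submodule.span ℝ (Set.range w))
    (he' : e ∉ Submodule.span ℝ (Set.range v)) :
    ∃ c : ℝ, c ≠ 0 ∧ ∀ u, Δ (Sum.elim u w) = c * Δ (Sum.elim u (Fin.cons e v : Fin (k+1) → (Fin (2*k+1) → ℝ))) := by
  have hli : LinearIndependent ℝ (Fin.cons e v : Fin (k+1) → (Fin (2*k+1) → ℝ)) :=
    linearIndependent_finCons.2 ⟨hv, he'⟩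
  have hwi := aux_indep_r Δ u0 w hw
  have hle : Submodule.span ℝ (Set.range (Fin.cons e v : Fin (k+1) → (Fin (2*k+1) → ℝ))) ≤
      Submodule.span ℝ (Set.range w) := by
    rw [Submodule.span_le]
    rintro _ ⟨i, rfl⟩
    refine Fin.cases ?_ (fun i => ?_) i
    · simpa using he
    · simpa using hvw i
  have heq := Submodule.eq_of_le_of_finrank_eq hle (by
    rw [finrank_span_eq_card hli, finrank_span_eq_card hwi])
  obtain ⟨c, hc⟩ := aux_change Δ (Fin.cons e v : Fin (k+1) → (Fin (2*k+1) → ℝ)) w hli (fun j => by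
    rw [heq]; exact Submodule.subset_span ⟨j, rfl⟩)
  refine ⟨c, ?_, hc⟩
  rintro rfl
  exact hw (by rw [hc, zero_mul])

theorem aux_case_pos {M : Type*} [TopologicalSpace M] [T2Space M] (hp : ∀ x : M, Filter.NeBot (𝓝[≠] x))
    {k : ℕ} (hodd : Odd k)
    (Δ : (Fin (2 * k + 1) → ℝ) [⋀^Fin k ⊕ Fin (k + 1)]→ₗ[ℝ] ℝ)
    (v : M → Fin k → (Fin (2 * k + 1) → ℝ)) (w : M → Fin (k + 1) → (Fin (2 * k + 1) → ℝ))
    (htr : ∀ x y, x ≠ y → Δ (Sum.elim (v x) (w y)) ≠ 0)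
    (hcv : ∀ x t t0, Δ (Sum.elim (v x) t0) ≠ 0 →
      Tendsto (fun y => Δ (Sum.elim (v y) t) / Δ (Sum.elim (v y) t0)) (𝓝 x)
      (𝓝 (Δ (Sum.elim (v x) t) / Δ (Sum.elim (v x) t0))))
    (hcw : ∀ x u u0, Δ (Sum.elim u0 (w x)) ≠ 0 →
      Tendsto (fun y => Δ (Sum.elim u (w y)) / Δ (Sum.elim u0 (w y))) (𝓝 x)
      (𝓝 (Δ (Sum.elim u (w x)) / Δ (Sum.elim u0 (w x)))))
    (hnest : ∀ x i, v x i ∈ Submodule.span ℝ (Set.range (w x)))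
    (o : M)
    (hT : ∀ y z, y ≠ o → z ≠ o → y ≠ z →
      0 < Δ (Sum.elim (v y) (w z)) * Δ (Sum.elim (v z) (w y)) *
        (Δ (Sum.elim (v o) (w z)) * Δ (Sum.elim (v z) (w o))) *
        (Δ (Sum.elim (v y) (w o)) * Δ (Sum.elim (v o) (w y)))) :
    ∃ f : M → Metric.sphere (0 : EuclideanSpace ℝ (Fin (k + 1))) 1,
      Continuous f ∧ Function.Injective f := by
  classical
  have hd : k + (k + 1) = 2 * k + 1 := by ring
  have hother : ∀ x : M, ∃ y, y ≠ x := fun x => by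
    obtain ⟨y, h, _⟩ := aux_two_others hp ∅ x
    exact ⟨y, h⟩
  have hvi : ∀ x, LinearIndependent ℝ (v x) := fun x => by
    obtain ⟨y, h⟩ := hother x
    exact aux_indep_l Δ _ _ (htr x y h.symm)
  have hwi : ∀ x, LinearIndependent ℝ (w x) := fun x => by
    obtain ⟨y, h⟩ := hother x
    exact aux_indep_r Δ _ _ (htr y x h)
  have hlift : ∀ x e, e ∈ Submodule.span ℝ (Set.range (w x)) → e ∉ Submodule.span ℝ (Set.range (v x)) →
      ∃ c : ℝ, c ≠ 0 ∧ ∀ u, Δ (Sum.elim u (w x)) = c * Δ (Sum.elim u (Fin.cons e (v x) : Fin (k+1) → (Fin (2*k+1) → ℝ))) := by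
    intro x e h1 h2
    obtain ⟨y, h⟩ := hother x
    exact aux_lift Δ (v x) (v y) (w x) (hvi x) (htr y x h) (hnest x) e h1 h2
  have hnot : ∀ x y e, x ≠ y → e ≠ 0 → e ∈ Submodule.span ℝ (Set.range (w y)) →
      e ∉ Submodule.span ℝ (Set.range (v x)) := by
    intro x y e hxy he h1 h2
    exact he (aux_disjoint hd Δ _ _ (htr x y hxy) e h2 h1)
  have hanti : ∀ (a b : Fin k → (Fin (2*k+1) → ℝ)) e,
      Δ (Sum.elim a (Fin.cons e b : Fin (k+1) → (Fin (2*k+1) → ℝ))) =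
      - Δ (Sum.elim b (Fin.cons e a : Fin (k+1) → (Fin (2*k+1) → ℝ))) := by
    intro a b e
    rw [aux_swap, hodd.neg_one_pow, neg_one_mul]
  obtain ⟨e, heW, heP⟩ : ∃ e, e ∈ Submodule.span ℝ (Set.range (w o)) ∧
      e ∉ Submodule.span ℝ (Set.range (v o)) := by
    by_contra hcon
    push Not at hcon
    have h1 : Submodule.span ℝ (Set.range (w o)) ≤ Submodule.span ℝ (Set.range (v o)) := hcon
    have h2 := Submodule.finrank_mono h1
    rw [finrank_span_eq_card (hvi o), finrank_span_eq_card (hwi o)] at h2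
    simp at h2
  let α : M → Fin k → ℝ := fun y i =>
    - (Δ (Sum.elim (Function.update (v o) i e) (w y)) / Δ (Sum.elim (v o) (w y)))
  let ev : (Fin k → ℝ) → (Fin (2*k+1) → ℝ) := fun β => e + ∑ i, β i • v o i
  have hsumP : ∀ β : Fin k → ℝ, ∑ i, β i • v o i ∈ Submodule.span ℝ (Set.range (v o)) := fun β =>
    Submodule.sum_mem _ fun i _ => Submodule.smul_mem _ _ (Submodule.subset_span ⟨i, rfl⟩)
  have hevP : ∀ β, ev β ∉ Submodule.span ℝ (Set.range (v o)) := by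
    intro β h
    apply heP
    have := Submodule.sub_mem _ h (hsumP β)
    simpa [ev] using this
  have hev0 : ∀ β, ev β ≠ 0 := by
    intro β h
    exact hevP β (h ▸ Submodule.zero_mem _)
  have hevW : ∀ β, ev β ∈ Submodule.span ℝ (Set.range (w o)) := by
    intro β
    refine Submodule.add_mem _ heW (Submodule.span_le.2 ?_ (hsumP β))
    rintro _ ⟨i, rfl⟩
    exact hnest o i
  have hevy : ∀ y, y ≠ o → ev (α y) ∈ Submodule.span ℝ (Set.range (w y)) := by
    intro y hy
    have := aux_qmem' hd Δ (v o) (w y) (htr o y hy.symm) e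
    simpa only [ev, α, neg_smul, Finset.sum_neg_distrib, ← sub_eq_add_neg] using this
  have hcα : ∀ y, y ≠ o → ∀ i, ContinuousAt (fun y => α y i) y := by
    intro y hy i
    exact (hcw y _ _ (htr o y hy.symm)).neg
  let g : {x : M // x ≠ o} → EuclideanSpace ℝ (Fin k) := fun y => WithLp.toLp 2 (α y)
  refine aux_to_sphere k o g ?_ ?_ ?_
  · refine (PiLp.continuous_toLp 2 _).comp (continuous_pi fun i => ?_)
    rw [continuous_iff_continuousAt]
    intro y
    exact (hcα y y.2 i).comp continuous_subtype_val.continuousAt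
  · rintro ⟨y, hy⟩ ⟨z, hz⟩ hyz
    by_contra hne
    have hne' : y ≠ z := fun h => hne (by simp [h])
    have hαe : α y = α z := (WithLp.toLp_injective 2) hyz
    have h1 := hevy y hy
    have h2 := hevy z hz
    rw [← hαe] at h2
    have h3 := hevW (α y)
    have h0 := hev0 (α y)
    obtain ⟨co, hco, eo⟩ := hlift o _ h3 (hevP _)
    obtain ⟨cy, hcy, ey⟩ := hlift y _ h1 (hnot y o _ hy h0 h3)
    obtain ⟨cz, hcz, ez⟩ := hlift z _ h2 (hnot z o _ hz h0 h3)
    have hpos := hT y z hy hz hne'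
    rw [ez, ez, ey, ey, eo, eo, hanti (v z) (v y), hanti (v z) (v o), hanti (v y) (v o)] at hpos
    revert hpos
    generalize Δ (Sum.elim (v y) (Fin.cons (ev (α y)) (v z) : Fin (k+1) → (Fin (2*k+1) → ℝ))) = A
    generalize Δ (Sum.elim (v o) (Fin.cons (ev (α y)) (v z) : Fin (k+1) → (Fin (2*k+1) → ℝ))) = B
    generalize Δ (Sum.elim (v o) (Fin.cons (ev (α y)) (v y) : Fin (k+1) → (Fin (2*k+1) → ℝ))) = C
    intro hpos
    nlinarith [sq_nonneg (cy * cz * co * A * B * C)]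
  · rw [tendsto_iff_ultrafilter]
    intro V hV
    by_contra hcon
    obtain ⟨K, hK, hKV⟩ : ∃ K, IsCompact K ∧ g ⁻¹' K ∈ V := by
      by_contra hall
      push Not at hall
      apply hcon
      intro s hs
      obtain ⟨K, hK, hKs⟩ := mem_cocompact.1 hs
      have := Ultrafilter.compl_mem_iff_notMem.2 (hall K hK)
      exact V.sets_of_superset this (fun y hy => hKs hy)
    obtain ⟨β', hβK, hβ⟩ := hK.ultrafilter_le_nhds (V.map g) (le_principal_iff.2 hKV)
    have hβ1 : Tendsto g V (𝓝 β') := hβ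
    let β : Fin k → ℝ := WithLp.ofLp β'
    have hβ2 : ∀ i, Tendsto (fun y : {x : M // x ≠ o} => α y i) V (𝓝 (β i)) := by
      intro i
      have := ((PiLp.continuous_ofLp 2 (fun _ : Fin k => ℝ)).tendsto β').comp hβ1
      exact (tendsto_pi_nhds.1 this) i
    have hval : Tendsto (fun y : {x : M // x ≠ o} => (y : M)) V (𝓝 o) := tendsto_iff_comap.2 hV
    obtain ⟨z, hz⟩ := hother o
    have hyz : ∀ᶠ y : {x : M // x ≠ o} in V, (y : M) ≠ z := hval.eventually_ne hz.symm
    have hneg : ∀ᶠ y : {x : M // x ≠ o} in V,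
        Δ (Sum.elim (v o) (w z)) *
        (- (Δ (Sum.elim (v y) (Fin.cons (ev (α y)) (v z) : Fin (k+1) → (Fin (2*k+1) → ℝ))) / Δ (Sum.elim (v y) (w z))))
        * Δ (Sum.elim (v z) (Fin.cons (ev (α y)) (v o) : Fin (k+1) → (Fin (2*k+1) → ℝ))) ≤ 0 := by
      filter_upwards [hyz] with y hyz
      have h1 := hevy y y.2
      have h3 := hevW (α y)
      have h0 := hev0 (α y)
      obtain ⟨co, hco, eo⟩ := hlift o _ h3 (hevP _)
      obtain ⟨cy, hcy, ey⟩ := hlift y _ h1 (hnot y o _ y.2 h0 h3)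
      have hpos := hT y z y.2 hz hyz
      have hD := htr y z hyz
      rw [ey, ey, eo, eo, hanti (v z) (v y), hanti (v y) (v o)] at hpos
      revert hpos hD
      generalize Δ (Sum.elim (v y) (Fin.cons (ev (α y)) (v z) : Fin (k+1) → (Fin (2*k+1) → ℝ))) = A
      generalize Δ (Sum.elim (v z) (Fin.cons (ev (α y)) (v o) : Fin (k+1) → (Fin (2*k+1) → ℝ))) = B
      generalize Δ (Sum.elim (v o) (Fin.cons (ev (α y)) (v y) : Fin (k+1) → (Fin (2*k+1) → ℝ))) = C
      generalize Δ (Sum.elim (v y) (w z)) = X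
      generalize Δ (Sum.elim (v o) (w z)) = Y
      intro hpos hD
      by_contra hc
      push Not at hc
      have h5 : X * (cy * -A) * (Y * (co * B)) * (co * -C * (cy * C)) =
        - ((cy * co * C * X) ^ 2 * (Y * (-(A / X)) * B)) := by
        field_simp
      rw [h5] at hpos
      have := mul_nonneg (sq_nonneg (cy * co * C * X)) hc.le
      linarith
    have hlim1 : Tendsto (fun y : {x : M // x ≠ o} =>
        Δ (Sum.elim (v y) (Fin.cons (ev (α y)) (v z) : Fin (k+1) → (Fin (2*k+1) → ℝ))) / Δ (Sum.elim (v y) (w z))) V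
        (𝓝 (Δ (Sum.elim (v o) (Fin.cons (ev β) (v z) : Fin (k+1) → (Fin (2*k+1) → ℝ))) / Δ (Sum.elim (v o) (w z)))) := by
      have hc := fun t => (hcv o t (w z) (htr o z hz.symm)).comp hval
      simp only [ev, aux_head_sum, add_div, Finset.sum_div, mul_div_assoc]
      exact (hc _).add (tendsto_finsetSum _ fun i _ => (hβ2 i).mul (hc _))
    have hlim2 : Tendsto (fun y : {x : M // x ≠ o} =>
        Δ (Sum.elim (v z) (Fin.cons (ev (α y)) (v o) : Fin (k+1) → (Fin (2*k+1) → ℝ)))) V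
        (𝓝 (Δ (Sum.elim (v z) (Fin.cons (ev β) (v o) : Fin (k+1) → (Fin (2*k+1) → ℝ))))) := by
      simp only [ev, aux_head_sum]
      exact tendsto_const_nhds.add (tendsto_finsetSum _ fun i _ => (hβ2 i).mul tendsto_const_nhds)
    have hfin := le_of_tendsto ((tendsto_const_nhds.mul hlim1.neg).mul hlim2) hneg
    obtain ⟨c, hc, ec⟩ := hlift o _ (hevW β) (hevP β)
    have hS := htr z o hz
    rw [ec] at hS
    have hS' := right_ne_zero_of_mul hS
    have hY := htr o z hz.symm
    rw [hanti (v o) (v z)] at hfin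
    revert hfin hS' hY
    generalize Δ (Sum.elim (v z) (Fin.cons (ev β) (v o) : Fin (k+1) → (Fin (2*k+1) → ℝ))) = A
    generalize Δ (Sum.elim (v o) (w z)) = Y
    intro hfin hA hY
    have : Y * -(-A / Y) * A = A ^ 2 := by field_simp
    rw [this] at hfin
    have := pow_pos (abs_pos.2 hA) 2
    rw [sq_abs] at this
    linarith

theorem aux_q_order {F : Type*} [TopologicalSpace F] [T1Space F] [PreconnectedSpace F]
    [TopologicalSpace.SeparableSpace F] [Nontrivial F] (q : F → F → ℝ)
    (hq1 : ∀ y, Continuous (q y)) (hq2 : ∀ z, Continuous (fun y => q y z))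
    (hneg : ∀ y z, y ≠ z → q y z * q z y < 0) (l : Filter F) [l.NeBot]
    (hl : ∀ d d' : F, ∀ᶠ y in l, (0 < q d y ↔ 0 < q d' y)) (hl' : ∀ d : F, ∀ᶠ y in l, y ≠ d) :
    ∃ g : F → ℝ, Continuous g ∧ Function.Injective g ∧ Tendsto g l (cocompact ℝ) := by
  classical
  let r : F → F → Prop := fun y z => y ≠ z ∧ 0 < q y z
  have hasymm : ∀ y z, r y z → ¬ r z y := by
    rintro y z ⟨h1, h2⟩ ⟨_, h3⟩
    have := hneg y z h1
    have := mul_pos h2 h3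
    linarith
  have htot : ∀ y z, y ≠ z → r y z ∨ r z y := by
    intro y z hyz
    rcases lt_trichotomy 0 (q y z) with h | h | h
    · exact Or.inl ⟨hyz, h⟩
    · have := hneg y z hyz
      rw [← h] at this; simp at this
    · refine Or.inr ⟨hyz.symm, ?_⟩
      have := hneg y z hyz
      by_contra hc
      have := mul_nonneg_of_nonpos_of_nonpos h.le (not_lt.1 hc)
      linarith
  have hopenU : ∀ y, IsOpen {z | r y z} := fun y =>
    by
    have := (isOpen_ne (x := y)).inter (isOpen_lt (continuous_const (y := (0:ℝ))) (hq1 y))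
    have e : {z | r y z} = {z | z ≠ y} ∩ {z | 0 < q y z} := by
      ext z
      exact and_congr_left' ne_comm
    rw [e]
    exact this
  have hopenL : ∀ y, IsOpen {z | r z y} := fun y =>
    (isOpen_ne (x := y)).inter (isOpen_lt continuous_const (hq2 y))
  have hcov : ∀ y, {z | r y z} ∪ {z | r z y} = {y}ᶜ := by
    intro y
    ext z
    constructor
    · rintro (h | h)
      · exact h.1.symm
      · exact h.1
    · intro h
      exact htot y z (Ne.symm h)
  have hdisj : ∀ y, Disjoint {z | r y z} {z | r z y} := by
    intro y
    rw [Set.disjoint_left]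
    intro z h1 h2
    exact hasymm _ _ h1 h2
  have htrans : ∀ y z x, r y z → r z x → r y x := by
    intro y z x hyz hzx
    have hc := aux_union_conn z {t | r z t} {t | r t z} (hopenU z) (hopenL z) (hdisj z)
      (fun h => h.1 rfl) (fun h => h.1 rfl) (hcov z)
    by_contra hyx
    have hsub : insert z {t | r z t} ⊆ {t | r y t} ∪ {t | r t y} := by
      rw [hcov]
      rintro t (rfl | ht) hty
      · exact hyz.1 hty.symm
      · rw [Set.mem_singleton_iff] at hty
        subst hty
        exact hasymm _ _ hyz ht
    have hx : x ∈ insert z {t | r z t} := Or.inr hzx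
    have hx' : r x y := (hsub hx).resolve_left hyx
    obtain ⟨t, _, h1, h2⟩ := hc _ _ (hopenU y) (hopenL y) hsub ⟨z, Or.inl rfl, hyz⟩ ⟨x, hx, hx'⟩
    exact hasymm _ _ h1 h2
  haveI : IsStrictTotalOrder F r :=
    { trichotomous := fun a b h1 h2 => by
        by_contra hab
        exact (htot a b hab).elim h1 h2
      irrefl := fun a h => h.1 rfl
      trans := htrans }
  letI : LinearOrder F := linearOrderOfSTO r
  refine aux_order_case (F := F) hopenU hopenL l ?_ hl'
  intro d d'
  filter_upwards [hl d d', hl' d, hl' d'] with y h1 h2 h3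
  change r d y ↔ r d' y
  exact ⟨fun h => ⟨h3.symm, h1.1 h.2⟩, fun h => ⟨h2.symm, h1.2 h.2⟩⟩

theorem aux_case_neg {M : Type*} [TopologicalSpace M] [T2Space M] [SecondCountableTopology M]
    (hp : ∀ x : M, Filter.NeBot (𝓝[≠] x))
    {k : ℕ} (hk : 0 < k)
    (Δ : (Fin (2 * k + 1) → ℝ) [⋀^Fin k ⊕ Fin (k + 1)]→ₗ[ℝ] ℝ)
    (v : M → Fin k → (Fin (2 * k + 1) → ℝ)) (w : M → Fin (k + 1) → (Fin (2 * k + 1) → ℝ))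
    (htr : ∀ x y, x ≠ y → Δ (Sum.elim (v x) (w y)) ≠ 0)
    (hcw : ∀ x u u0, Δ (Sum.elim u0 (w x)) ≠ 0 →
      Tendsto (fun y => Δ (Sum.elim u (w y)) / Δ (Sum.elim u0 (w y))) (𝓝 x)
      (𝓝 (Δ (Sum.elim u (w x)) / Δ (Sum.elim u0 (w x)))))
    (o : M) (hF : PreconnectedSpace {x : M // x ≠ o}) (q : {x : M // x ≠ o} → {x : M // x ≠ o} → ℝ)
    (hq : ∀ y z, q y z = Δ (Sum.elim (v y) (w z)) / (Δ (Sum.elim (v o) (w z)) * Δ (Sum.elim (v y) (w o))))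
    (hq1 : ∀ y, Continuous (q y)) (hq2 : ∀ z, Continuous (fun y => q y z))
    (hneg : ∀ y z, y ≠ z → q y z * q z y < 0) :
    ∃ f : M → Metric.sphere (0 : EuclideanSpace ℝ (Fin (k + 1))) 1,
      Continuous f ∧ Function.Injective f := by
  have hNT : Nontrivial {x : M // x ≠ o} := by
    obtain ⟨y, h, _⟩ := aux_two_others hp ∅ o
    obtain ⟨z, h1, h2⟩ := aux_two_others hp {y} o
    refine ⟨⟨z, h1⟩, ⟨y, h⟩, fun h3 => h2 ?_⟩
    simpa using h3
  have hNB : (comap (Subtype.val : {x : M // x ≠ o} → M) (𝓝 o)).NeBot := by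
    rw [comap_neBot_iff]
    intro t ht
    obtain ⟨y, hy1, hy2⟩ := (hp o).nonempty_of_mem (inter_mem (mem_nhdsWithin_of_mem_nhds ht) self_mem_nhdsWithin)
    exact ⟨⟨y, hy2⟩, hy1⟩
  have hval : Tendsto (fun y : {x : M // x ≠ o} => (y : M)) (comap Subtype.val (𝓝 o)) (𝓝 o) := tendsto_comap
  have hl' : ∀ d : {x : M // x ≠ o}, ∀ᶠ y in comap Subtype.val (𝓝 o), y ≠ d := by
    intro d
    filter_upwards [hval.eventually_ne d.2.symm] with y hy h
    exact hy (by rw [h])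
  have hl : ∀ d d' : {x : M // x ≠ o}, ∀ᶠ y in comap Subtype.val (𝓝 o), (0 < q d y ↔ 0 < q d' y) := by
    intro d d'
    have h1 := (hcw o (v d) (v d') (htr d' o d'.2)).comp hval
    have h2 := h1.mul_const (Δ (Sum.elim (v d') (w o)) / Δ (Sum.elim (v d) (w o)))
    have e1 := htr d o d.2
    have e2 := htr d' o d'.2
    have h3 : Δ (Sum.elim (v d) (w o)) / Δ (Sum.elim (v d') (w o)) *
      (Δ (Sum.elim (v d') (w o)) / Δ (Sum.elim (v d) (w o))) = 1 := by field_simp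
    rw [h3] at h2
    filter_upwards [h2.eventually (lt_mem_nhds one_pos), hl' d'] with y hy hyd
    have e3 := htr d' y (fun h => hyd (Subtype.ext h.symm))
    have e4 := htr o y y.2.symm
    have : q d y = q d' y * (Δ (Sum.elim (v d) (w y)) / Δ (Sum.elim (v d') (w y)) *
      (Δ (Sum.elim (v d') (w o)) / Δ (Sum.elim (v d) (w o)))) := by
      rw [hq, hq]; field_simp
    rw [this]
    exact mul_pos_iff_of_pos_right hy
  haveI : SecondCountableTopology {x : M // x ≠ o} :=
    TopologicalSpace.Subtype.secondCountableTopology _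
  haveI : TopologicalSpace.SeparableSpace {x : M // x ≠ o} := inferInstance
  obtain ⟨g, hg1, hg2, hg3⟩ := aux_q_order q hq1 hq2 hneg _ hl hl'
  refine aux_to_sphere k o (fun y => EuclideanSpace.single ⟨0, hk⟩ (g y)) ?_ ?_ ?_
  · have : Continuous (fun t : ℝ => (EuclideanSpace.single (⟨0, hk⟩ : Fin k) t : EuclideanSpace ℝ (Fin k))) :=
      (PiLp.continuous_toLp 2 _).comp
        (show Continuous (fun t : ℝ => (Pi.single (⟨0, hk⟩ : Fin k) t : Fin k → ℝ)) from continuous_single (A := fun _ : Fin k => ℝ) ⟨0, hk⟩)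
    exact this.comp hg1
  · intro y z hyz
    have := congrArg (fun t : EuclideanSpace ℝ (Fin k) => t ⟨0, hk⟩) hyz
    exact hg2 (by simpa using this)
  · rw [← Metric.cobounded_eq_cocompact, ← tendsto_norm_atTop_iff_cobounded] at hg3 ⊢
    simpa using hg3

theorem aux_main {M : Type*} [TopologicalSpace M] [T2Space M] [SecondCountableTopology M]
    [CompactSpace M] [ConnectedSpace M]
    (hp : ∀ x : M, Filter.NeBot (𝓝[≠] x))
    {k : ℕ} (hodd : Odd k)
    (Δ : (Fin (2 * k + 1) → ℝ) [⋀^Fin k ⊕ Fin (k + 1)]→ₗ[ℝ] ℝ)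
    (v : M → Fin k → (Fin (2 * k + 1) → ℝ)) (w : M → Fin (k + 1) → (Fin (2 * k + 1) → ℝ))
    (htr : ∀ x y, x ≠ y → Δ (Sum.elim (v x) (w y)) ≠ 0)
    (hcv : ∀ x t t0, Δ (Sum.elim (v x) t0) ≠ 0 →
      Tendsto (fun y => Δ (Sum.elim (v y) t) / Δ (Sum.elim (v y) t0)) (𝓝 x)
      (𝓝 (Δ (Sum.elim (v x) t) / Δ (Sum.elim (v x) t0))))
    (hcw : ∀ x u u0, Δ (Sum.elim u0 (w x)) ≠ 0 →
      Tendsto (fun y => Δ (Sum.elim u (w y)) / Δ (Sum.elim u0 (w y))) (𝓝 x)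
      (𝓝 (Δ (Sum.elim u (w x)) / Δ (Sum.elim u0 (w x)))))
    (hnest : ∀ x i, v x i ∈ Submodule.span ℝ (Set.range (w x))) :
    ∃ f : M → Metric.sphere (0 : EuclideanSpace ℝ (Fin (k + 1))) 1,
      Continuous f ∧ Function.Injective f := by
  obtain ⟨o, ho⟩ := aux_noncut (M := M)
  have hF : PreconnectedSpace {x : M // x ≠ o} := Subtype.preconnectedSpace ho
  let q : {x : M // x ≠ o} → {x : M // x ≠ o} → ℝ := fun y z =>
    Δ (Sum.elim (v y) (w z)) / (Δ (Sum.elim (v o) (w z)) * Δ (Sum.elim (v y) (w o)))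
  have hq1 : ∀ y, Continuous (q y) := by
    intro y
    rw [continuous_iff_continuousAt]
    intro z
    have h1 := ((hcw z (v y) (v o) (htr o z z.2.symm)).comp
      (continuous_subtype_val.tendsto z)).div_const (Δ (Sum.elim (v y) (w o)))
    simp only [div_div] at h1
    refine h1.congr fun t => ?_
    simp only [q, Function.comp, div_div]
  have hq2 : ∀ z, Continuous (fun y => q y z) := by
    intro z
    rw [continuous_iff_continuousAt]
    intro y
    have h1 := ((hcv y (w z) (w o) (htr y o y.2)).comp
      (continuous_subtype_val.tendsto y)).div_const (Δ (Sum.elim (v o) (w z)))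
    simp only [div_div, mul_comm _ (Δ (Sum.elim (v o) (w z)))] at h1
    refine h1.congr fun t => ?_
    simp only [q, Function.comp, div_div]
    rw [mul_comm (Δ (Sum.elim (v o) (w z)))]
  have hqne : ∀ y z, y ≠ z → q y z ≠ 0 := by
    intro y z hyz
    exact div_ne_zero (htr y z (fun h => hyz (Subtype.ext h)))
      (mul_ne_zero (htr o z z.2.symm) (htr y o y.2))
  have hcont : ∀ y, Continuous (fun z => q y z * q z y) := fun y => (hq1 y).mul (hq2 y)
  rcases aux_dichotomy (fun y z => q y z * q z y) (fun y z => mul_comm _ _)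
    (fun y z h => mul_ne_zero (hqne y z h) (hqne z y h.symm))
    (fun y => (isOpen_ne (x := y)).inter (isOpen_lt continuous_const (hcont y)))
    (fun y => (isOpen_ne (x := y)).inter (isOpen_lt (hcont y) continuous_const)) with h | h
  · refine aux_case_pos hp hodd Δ v w htr hcv hcw hnest o ?_
    intro y z hy hz hyz
    have h1 := h ⟨y, hy⟩ ⟨z, hz⟩ (fun h => hyz (congrArg Subtype.val h))
    have e1 := htr o y hy.symm
    have e2 := htr o z hz.symm
    have e3 := htr y o hy
    have e4 := htr z o hz
    have h2 := mul_pos h1 (pow_pos (abs_pos.2 (mul_ne_zero (mul_ne_zero e1 e2) (mul_ne_zero e3 e4))) 2)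
    rw [sq_abs] at h2
    refine lt_of_lt_of_eq h2 ?_
    simp only [q]
    field_simp
  · exact aux_case_neg hp hodd.pos Δ v w htr hcw o hF q (fun _ _ => rfl) hq1 hq2 h

/-- The determinant as an alternating form on a pair of complementary tuples. -/
noncomputable def auxD (a b d : ℕ) (h : a + b = d) : (Fin d → ℝ) [⋀^Fin a ⊕ Fin b]→ₗ[ℝ] ℝ :=
  (Matrix.detRowAlternating (R := ℝ) (n := Fin d)).domDomCongr
    (finSumFinEquiv.trans (finCongr h)).symm

theorem auxD_apply (a b d : ℕ) (h : a + b = d) (x : Fin a ⊕ Fin b → (Fin d → ℝ)) :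
    auxD a b d h x = Matrix.detRowAlternating (fun i => x ((finSumFinEquiv.trans (finCongr h)).symm i)) :=
  rfl

theorem aux_top_mul (a b d : ℕ) (h : a + b = d) (u : Fin a → (Fin d → ℝ)) (t : Fin b → (Fin d → ℝ)) :
    topDegreeDet ℝ d (ExteriorAlgebra.ιMulti ℝ a u * ExteriorAlgebra.ιMulti ℝ b t) =
      auxD a b d h (Sum.elim u t) := by
  subst h
  rw [ExteriorAlgebra.ιMulti_mul_ιMulti, topDegreeDet, ExteriorAlgebra.liftAlternating_apply_ιMulti,
    dif_pos rfl, auxD_apply]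
  congr 1
  funext i
  refine Fin.addCases (fun j => ?_) (fun j => ?_) i
  · simp
  · simp

theorem aux_mul_ne (a b d : ℕ) (h : a + b = d) (u : Fin a → (Fin d → ℝ)) (t : Fin b → (Fin d → ℝ)) :
    ExteriorAlgebra.ιMulti ℝ a u * ExteriorAlgebra.ιMulti ℝ b t ≠ 0 ↔
      auxD a b d h (Sum.elim u t) ≠ 0 := by
  constructor
  · intro h1 h2
    apply h1
    subst h
    rw [ExteriorAlgebra.ιMulti_mul_ιMulti]
    apply AlternatingMap.map_linearDependent
    intro hli
    have h3 := aux_top_mul a b _ rfl u t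
    rw [h2, ExteriorAlgebra.ιMulti_mul_ιMulti, topDegreeDet,
      ExteriorAlgebra.liftAlternating_apply_ιMulti, dif_pos rfl] at h3
    have h4 := (Matrix.linearIndependent_rows_iff_isUnit (A := (Fin.append u t : Matrix (Fin (a+b)) (Fin (a+b)) ℝ))).1 hli
    have h5 := (Matrix.isUnit_iff_isUnit_det
      (A := (Fin.append u t : Matrix (Fin (a+b)) (Fin (a+b)) ℝ))).1 h4
    exact h5.ne_zero h3
  · intro h1 h2
    rw [← aux_top_mul, h2, map_zero] at h1
    exact h1 rfl

theorem auxD_swap (a b d : ℕ) (h : a + b = d) (h' : b + a = d) :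
    ∃ c : ℝ, c ≠ 0 ∧ ∀ (u : Fin a → (Fin d → ℝ)) (t : Fin b → (Fin d → ℝ)),
      auxD b a d h' (Sum.elim t u) = c * auxD a b d h (Sum.elim u t) := by
  let σ : Equiv.Perm (Fin d) := ((finSumFinEquiv.trans (finCongr h')).symm.trans
    (Equiv.sumComm _ _)).trans (finSumFinEquiv.trans (finCongr h))
  refine ⟨((Equiv.Perm.sign σ : ℤˣ) : ℤ), by simp, fun u t => ?_⟩
  rw [auxD_apply, auxD_apply]
  have := (Matrix.detRowAlternating (R := ℝ) (n := Fin d)).map_perm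
    (fun i => (Sum.elim u t) ((finSumFinEquiv.trans (finCongr h)).symm i)) σ
  rw [Units.smul_def, zsmul_eq_mul] at this
  rw [← this]
  congr 1
  funext i
  simp only [Function.comp, σ, Equiv.trans_apply, Equiv.symm_trans_apply, Equiv.symm_apply_apply]
  generalize finSumFinEquiv.symm ((finCongr h').symm i) = z
  cases z <;> simp

theorem aux_std_mem (b d : ℕ) (t : Fin b → (Fin d → ℝ)) :
    ExteriorAlgebra.ιMulti ℝ b t ∈ Submodule.span ℝ (Set.range (stdBasisWedge ℝ (d := d))) := by
  have h1 : ExteriorAlgebra.ιMulti ℝ b t ∈ (⋀[ℝ]^b (Fin d → ℝ)) :=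
    ExteriorAlgebra.ιMulti_range ℝ b (Set.mem_range_self t)
  rw [← exteriorPower.ιMulti_family_span_fixedDegree_of_span ℝ
    (Pi.basisFun ℝ (Fin d)).span_eq] at h1
  refine Submodule.span_mono ?_ h1
  rintro _ ⟨s, rfl⟩
  refine ⟨s.1, ?_⟩
  rw [ExteriorAlgebra.ιMulti_family, ExteriorAlgebra.ιMulti_apply, stdBasisWedge,
    Set.powersetCard.ofFinEmbEquiv_symm_apply, ← Finset.listMap_orderEmbOfFin_finRange s.1 s.2,
    List.map_map, List.ofFn_eq_map]
  congr 2
  funext i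
  simp

theorem aux_lin_cont (a b d : ℕ) (t : Fin b → (Fin d → ℝ)) :
    Continuous (fun ω : ⋀[ℝ]^a (Fin d → ℝ) => topDegreeDet ℝ d ((ω : ExteriorAlgebra ℝ (Fin d → ℝ)) *
      ExteriorAlgebra.ιMulti ℝ b t)) := by
  have h := aux_std_mem b d t
  generalize ExteriorAlgebra.ιMulti ℝ b t = y at h
  induction h using Submodule.span_induction with
  | mem x hx =>
    obtain ⟨s, rfl⟩ := hx
    have h1 : Continuous (fun ω : ⋀[ℝ]^a (Fin d → ℝ) =>
      extCoordinates ℝ d (ω : ExteriorAlgebra ℝ (Fin d → ℝ))) := continuous_induced_dom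
    exact (continuous_apply s).comp h1
  | zero => simpa using continuous_const
  | add x y _ _ hx hy =>
    simp only [mul_add, map_add]
    exact hx.add hy
  | smul c x _ hx =>
    simp only [mul_smul_comm, map_smul]
    exact hx.const_smul c

theorem aux_proj_cont {V : Type*} [AddCommGroup V] [Module ℝ V] [TopologicalSpace V]
    (L L' : V →ₗ[ℝ] ℝ) (hL : Continuous L) (hL' : Continuous L') (p : V) (hp : p ≠ 0)
    (hpL : L' p ≠ 0) {α : Type*} (l : Filter α) (f : α → V) (hf : ∀ n, f n ≠ 0)
    (ht : Tendsto (fun n => Projectivization.mk ℝ (f n) (hf n)) l (𝓝 (Projectivization.mk ℝ p hp))) :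
    Tendsto (fun n => L (f n) / L' (f n)) l (𝓝 (L p / L' p)) := by
  have hrep : ∀ (x : V) (hx : x ≠ 0), ∃ c : ℝ, c ≠ 0 ∧ x = c • (Projectivization.mk ℝ x hx).rep := by
    intro x hx
    obtain ⟨c, hc⟩ := Projectivization.exists_smul_eq_mk_rep ℝ x hx
    refine ⟨((c⁻¹ : ℝˣ) : ℝ), Units.ne_zero _, ?_⟩
    rw [← hc, Units.smul_def, smul_smul]
    simp
  have hratio : ∀ (x : V) (hx : x ≠ 0), L x / L' x = L (Projectivization.mk ℝ x hx).rep /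
      L' (Projectivization.mk ℝ x hx).rep := by
    intro x hx
    obtain ⟨c, hc, h⟩ := hrep x hx
    conv_lhs => rw [h]
    rw [map_smul, map_smul, smul_eq_mul, smul_eq_mul, mul_div_mul_left _ _ hc]
  have hnz : ∀ (x : V) (hx : x ≠ 0), L' x ≠ 0 ↔ L' (Projectivization.mk ℝ x hx).rep ≠ 0 := by
    intro x hx
    obtain ⟨c, hc, h⟩ := hrep x hx
    conv_lhs => rw [h]
    rw [map_smul, smul_eq_mul]
    simp [hc]
  rw [tendsto_nhds]
  intro U hU hpU
  let W : Set (Projectivization ℝ V) := {P | L' P.rep ≠ 0 ∧ L P.rep / L' P.rep ∈ U}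
  have hW : IsOpen W := by
    have : IsOpen {x : {x : V // x ≠ 0} | L' x ≠ 0 ∧ L x / L' x ∈ U} := by
      rw [isOpen_iff_mem_nhds]
      rintro x ⟨hx1, hx2⟩
      have c1 : ContinuousAt (fun x : {x : V // x ≠ 0} => L' x) x :=
        (hL'.comp continuous_subtype_val).continuousAt
      have c2 : ContinuousAt (fun x : {x : V // x ≠ 0} => L x) x :=
        (hL.comp continuous_subtype_val).continuousAt
      have c3 := c2.div c1 hx1
      exact inter_mem (c1.eventually_ne hx1) (c3 (hU.mem_nhds hx2))
    have e : {x : {x : V // x ≠ 0} | L' x ≠ 0 ∧ L x / L' x ∈ U} =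
        (fun x : {x : V // x ≠ 0} => Projectivization.mk ℝ x.1 x.2) ⁻¹' W := by
      ext x
      change _ ∧ _ ↔ _ ∧ _
      rw [hnz x.1 x.2, hratio x.1 x.2]
    rw [e] at this
    exact this
  have := ht (hW.mem_nhds ⟨(hnz p hp).1 hpL, by rw [← hratio]; exact hpU⟩)
  filter_upwards [this] with n hn
  have := hn.2
  rwa [← hratio] at this

theorem aux_R1 (a b d : ℕ) (h : a + b = d) {α : Type*} (l : Filter α) (f : α → Fin a → (Fin d → ℝ))
    (hf : ∀ n, wedgeMk ℝ a (f n) ≠ 0) (p : Fin a → (Fin d → ℝ)) (hp : wedgeMk ℝ a p ≠ 0)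
    (ht : Tendsto (fun n => Projectivization.mk ℝ (wedgeMk ℝ a (f n)) (hf n)) l
      (𝓝 (Projectivization.mk ℝ (wedgeMk ℝ a p) hp)))
    (t t0 : Fin b → (Fin d → ℝ)) (h0 : auxD a b d h (Sum.elim p t0) ≠ 0) :
    Tendsto (fun n => auxD a b d h (Sum.elim (f n) t) / auxD a b d h (Sum.elim (f n) t0)) l
      (𝓝 (auxD a b d h (Sum.elim p t) / auxD a b d h (Sum.elim p t0))) := by
  let L : (Fin b → (Fin d → ℝ)) → (⋀[ℝ]^a (Fin d → ℝ)) →ₗ[ℝ] ℝ := fun t =>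
    ((topDegreeDet ℝ d).comp (LinearMap.mulRight ℝ (ExteriorAlgebra.ιMulti ℝ b t))).comp
      (Submodule.subtype _)
  have hL : ∀ t u, L t (wedgeMk ℝ a u) = auxD a b d h (Sum.elim u t) := fun t u =>
    aux_top_mul a b d h u t
  have := aux_proj_cont (L t) (L t0) (aux_lin_cont a b d t) (aux_lin_cont a b d t0) _ hp
    (by rw [hL]; exact h0) l _ hf ht
  simpa only [hL] using this

theorem aux_R2 (a b d : ℕ) (h : a + b = d) {α : Type*} (l : Filter α) (f : α → Fin b → (Fin d → ℝ))
    (hf : ∀ n, wedgeMk ℝ b (f n) ≠ 0) (p : Fin b → (Fin d → ℝ)) (hp : wedgeMk ℝ b p ≠ 0)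
    (ht : Tendsto (fun n => Projectivization.mk ℝ (wedgeMk ℝ b (f n)) (hf n)) l
      (𝓝 (Projectivization.mk ℝ (wedgeMk ℝ b p) hp)))
    (u u0 : Fin a → (Fin d → ℝ)) (h0 : auxD a b d h (Sum.elim u0 p) ≠ 0) :
    Tendsto (fun n => auxD a b d h (Sum.elim u (f n)) / auxD a b d h (Sum.elim u0 (f n))) l
      (𝓝 (auxD a b d h (Sum.elim u p) / auxD a b d h (Sum.elim u0 p))) := by
  have h' : b + a = d := by omega
  obtain ⟨c, hc, hs⟩ := auxD_swap a b d h h'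
  have := aux_R1 b a d h' l f hf p hp ht u u0 (by rw [hs]; exact mul_ne_zero hc h0)
  simpa only [hs, mul_div_mul_left _ _ hc] using this

theorem aux_wedge_ne {a b d : ℕ} (h : a + b = d) (u : Fin a → (Fin d → ℝ)) (t : Fin b → (Fin d → ℝ))
    (h0 : auxD a b d h (Sum.elim u t) ≠ 0) : wedgeMk ℝ a u ≠ 0 := by
  intro h1
  have h2 : ExteriorAlgebra.ιMulti ℝ a u = 0 := congrArg Subtype.val h1
  rw [← aux_mul_ne, h2, zero_mul] at h0
  exact h0 rfl

theorem aux_wedge_ne' {a b d : ℕ} (h : a + b = d) (u : Fin a → (Fin d → ℝ)) (t : Fin b → (Fin d → ℝ))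
    (h0 : auxD a b d h (Sum.elim u t) ≠ 0) : wedgeMk ℝ b t ≠ 0 := by
  intro h1
  have h2 : ExteriorAlgebra.ιMulti ℝ b t = 0 := congrArg Subtype.val h1
  rw [← aux_mul_ne, h2, mul_zero] at h0
  exact h0 rfl

theorem auxD_mulVec {a b d : ℕ} (h : a + b = d) (A : Matrix.SpecialLinearGroup (Fin d) ℝ)
    (u : Fin a → (Fin d → ℝ)) (t : Fin b → (Fin d → ℝ)) :
    auxD a b d h (Sum.elim (fun i => (A : Matrix (Fin d) (Fin d) ℝ) *ᵥ u i)
      (fun i => (A : Matrix (Fin d) (Fin d) ℝ) *ᵥ t i)) = auxD a b d h (Sum.elim u t) := by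
  rw [auxD_apply, auxD_apply]
  let B : Matrix (Fin d) (Fin d) ℝ := fun i => (Sum.elim u t) ((finSumFinEquiv.trans (finCongr h)).symm i)
  have : (fun i => (Sum.elim (fun i => (A : Matrix (Fin d) (Fin d) ℝ) *ᵥ u i)
      (fun i => (A : Matrix (Fin d) (Fin d) ℝ) *ᵥ t i))
        ((finSumFinEquiv.trans (finCongr h)).symm i)) = B * (A : Matrix (Fin d) (Fin d) ℝ)ᵀ := by
    funext i
    have e : (B * (A : Matrix (Fin d) (Fin d) ℝ)ᵀ) i = (A : Matrix (Fin d) (Fin d) ℝ) *ᵥ (B i) := by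
      funext j
      simp [Matrix.mul_apply, Matrix.mulVec, dotProduct, mul_comm]
    rw [e]
    simp only [B]
    generalize (finSumFinEquiv.trans (finCongr h)).symm i = z
    cases z <;> rfl
  rw [this]
  change Matrix.det _ = Matrix.det B
  rw [Matrix.det_mul, Matrix.det_transpose, A.2, mul_one]

theorem aux_all {Γ M : Type} [Group Γ] [TopologicalSpace M] [MulAction Γ M]
    (hBP : IsBoundaryPair Γ M)
    (huniform : ∀ x : M, IsConicalLimitPoint Γ x)
    (hconn : ConnectedSpace M)
    (k : ℕ) (hodd : Odd k) (m : ℕ) (hm : m = k + 1)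
    (ρ : Γ →* Matrix.SpecialLinearGroup (Fin (2 * k + 1)) ℝ)
    (ξk : M → Projectivization ℝ (⋀[ℝ]^k (Fin (2 * k + 1) → ℝ)))
    (ξdk : M → Projectivization ℝ (⋀[ℝ]^m (Fin (2 * k + 1) → ℝ)))
    (continuous_fst : Continuous ξk)
    (continuous_snd : Continuous ξdk)
    (decomposable_fst : ∀ x : M, ∃ (v : Fin k → (Fin (2 * k + 1) → ℝ)) (_ : LinearIndependent ℝ v)
      (hne : wedgeMk ℝ k v ≠ 0), ξk x = Projectivization.mk ℝ (wedgeMk ℝ k v) hne)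
    (decomposable_snd : ∀ x : M, ∃ (w : Fin m → (Fin (2 * k + 1) → ℝ)) (_ : LinearIndependent ℝ w)
      (hne : wedgeMk ℝ m w ≠ 0), ξdk x = Projectivization.mk ℝ (wedgeMk ℝ m w) hne)
    (equivariant_snd : ∀ (γ : Γ) (x : M) (w : Fin m → (Fin (2 * k + 1) → ℝ))
      (hne : wedgeMk ℝ m w ≠ 0)
      (hne' : wedgeMk ℝ m (fun i => (ρ γ : Matrix (Fin (2 * k + 1)) (Fin (2 * k + 1)) ℝ) *ᵥ w i) ≠ 0),
      ξdk x = Projectivization.mk ℝ (wedgeMk ℝ m w) hne →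
      ξdk (γ • x) = Projectivization.mk ℝ
        (wedgeMk ℝ m (fun i => (ρ γ : Matrix (Fin (2 * k + 1)) (Fin (2 * k + 1)) ℝ) *ᵥ w i)) hne')
    (transverse : ∀ (x y : M), x ≠ y →
      ∀ (v : Fin k → (Fin (2 * k + 1) → ℝ)) (w : Fin m → (Fin (2 * k + 1) → ℝ))
      (hv : wedgeMk ℝ k v ≠ 0) (hw : wedgeMk ℝ m w ≠ 0),
      ξk x = Projectivization.mk ℝ (wedgeMk ℝ k v) hv →
      ξdk y = Projectivization.mk ℝ (wedgeMk ℝ m w) hw →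
      ((wedgeMk ℝ k v : ⋀[ℝ]^k (Fin (2 * k + 1) → ℝ)) : ExteriorAlgebra ℝ (Fin (2 * k + 1) → ℝ)) *
        ((wedgeMk ℝ m w : ⋀[ℝ]^m (Fin (2 * k + 1) → ℝ)) :
          ExteriorAlgebra ℝ (Fin (2 * k + 1) → ℝ)) ≠ 0)
    (dynamics : ∀ (g : ℕ → Γ) (x y : M),
      (∀ z : M, z ≠ y → Tendsto (fun n => g n • z) atTop (𝓝 x)) →
      (∀ z : M, z ≠ x → Tendsto (fun n => (g n)⁻¹ • z) atTop (𝓝 y)) →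
      ∀ (w : Fin m → (Fin (2 * k + 1) → ℝ)) (hw : wedgeMk ℝ m w ≠ 0),
      ξdk y = Projectivization.mk ℝ (wedgeMk ℝ m w) hw →
      ∀ (u : Fin k → (Fin (2 * k + 1) → ℝ))
        (hu : ∀ n, wedgeMk ℝ k (fun i => (ρ (g n) :
          Matrix (Fin (2 * k + 1)) (Fin (2 * k + 1)) ℝ) *ᵥ u i) ≠ 0),
        ((wedgeMk ℝ k u : ⋀[ℝ]^k (Fin (2 * k + 1) → ℝ)) :
          ExteriorAlgebra ℝ (Fin (2 * k + 1) → ℝ)) *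
          ((wedgeMk ℝ m w : ⋀[ℝ]^m (Fin (2 * k + 1) → ℝ)) :
            ExteriorAlgebra ℝ (Fin (2 * k + 1) → ℝ)) ≠ 0 →
        Tendsto (fun n => Projectivization.mk ℝ
            (wedgeMk ℝ k (fun i => (ρ (g n) :
              Matrix (Fin (2 * k + 1)) (Fin (2 * k + 1)) ℝ) *ᵥ u i)) (hu n))
          atTop (𝓝 (ξk x))) :
    ∃ f : M → Metric.sphere (0 : EuclideanSpace ℝ (Fin (k + 1))) 1,
      Continuous f ∧ Function.Injective f := by
  subst hm
  have := hBP.compact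
  have := hBP.metrizable
  have : T2Space M := inferInstance
  have hsc : SecondCountableTopology M := by
    let _ := TopologicalSpace.metrizableSpaceMetric M
    infer_instance
  have hp := hBP.perfect
  choose v hv hvne hvx using decomposable_fst
  choose w hw hwne hwx using decomposable_snd
  have hd : k + (k + 1) = 2 * k + 1 := by ring
  have htr : ∀ x y, x ≠ y → auxD k (k + 1) (2 * k + 1) hd (Sum.elim (v x) (w y)) ≠ 0 := by
    intro x y hxy
    rw [← aux_mul_ne]
    exact transverse x y hxy (v x) (w y) (hvne x) (hwne y) (hvx x) (hwx y)
  have hA : AuxData k (auxD k (k + 1) (2 * k + 1) hd)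
      (fun γ : Γ => Matrix.mulVecLin (ρ γ : Matrix (Fin (2 * k + 1)) (Fin (2 * k + 1)) ℝ)) v w :=
    { inv := by
        intro γ p
        simp only [Matrix.mulVecLin_apply, Matrix.mulVec_mulVec]
        rw [← Matrix.SpecialLinearGroup.coe_mul, ← map_mul, inv_mul_cancel, map_one]
        simp
      trans := htr
      contv := by
        intro x t t0 h0
        refine aux_R1 k (k + 1) _ hd (𝓝 x) v hvne (v x) (hvne x) ?_ t t0 h0
        simp only [← hvx]
        exact continuous_fst.tendsto x
      contw := by
        intro x u u0 h0
        refine aux_R2 k (k + 1) _ hd (𝓝 x) w hwne (w x) (hwne x) ?_ u u0 h0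
        simp only [← hwx]
        exact continuous_snd.tendsto x
      equiw := by
        intro γ x p hpm
        obtain ⟨z, hz, -⟩ := aux_two_others hp ∅ x
        have h1 := htr z x hz
        rw [← auxD_mulVec hd (ρ γ)] at h1
        have h2 := aux_wedge_ne' hd _ _ h1
        have h3 := equivariant_snd γ x (w x) (hwne x) h2 (hwx x)
        rw [hwx (γ • x), Projectivization.mk_eq_mk_iff] at h3
        obtain ⟨c, hc⟩ := h3
        have hc' := congrArg Subtype.val hc
        set w' : Fin (k + 1) → (Fin (2 * k + 1) → ℝ) :=
          fun i => (ρ γ : Matrix (Fin (2 * k + 1)) (Fin (2 * k + 1)) ℝ) *ᵥ w x i with hw'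
        have hc2 : (c : ℝ) • ExteriorAlgebra.ιMulti ℝ (k + 1) w' =
          ExteriorAlgebra.ιMulti ℝ (k + 1) (w (γ • x)) := hc'
        have h4 : ∀ u, auxD k (k + 1) (2 * k + 1) hd (Sum.elim u (w (γ • x))) =
            c * auxD k (k + 1) (2 * k + 1) hd (Sum.elim u w') := by
          intro u
          rw [← aux_top_mul, ← aux_top_mul, ← hc2, mul_smul_comm, map_smul, smul_eq_mul]
        have h5 := aux_qmem' hd _ _ _ h1 p
        have h6 : ∀ i, auxD k (k + 1) (2 * k + 1) hd (Sum.elim (Function.update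
            (fun i => (ρ γ : Matrix (Fin (2 * k + 1)) (Fin (2 * k + 1)) ℝ) *ᵥ v z i) i p) w') = 0 := by
          intro i
          have h7 := aux_vanish_l (auxD k (k + 1) (2 * k + 1) hd)
            (fun i => (ρ γ : Matrix (Fin (2 * k + 1)) (Fin (2 * k + 1)) ℝ) *ᵥ v z i) _ i p hpm
          rw [h4] at h7
          exact (mul_eq_zero.1 h7).resolve_left c.ne_zero
        simp only [h6, zero_div, zero_smul, Finset.sum_const_zero, sub_zero] at h5
        obtain ⟨a, rfl⟩ := (Submodule.mem_span_range_iff_exists_fun ℝ).1 h5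
        rw [map_sum]
        refine Submodule.sum_mem _ fun i _ => ?_
        rw [map_smul]
        refine Submodule.smul_mem _ _ (Submodule.subset_span ⟨i, ?_⟩)
        simp only [hw', Matrix.mulVecLin_apply, Matrix.mulVec_mulVec]
        rw [← Matrix.SpecialLinearGroup.coe_mul, ← map_mul, inv_mul_cancel, map_one]
        simp
      dyn := by
        intro g x y h1 h2 u hu t t0 h0
        have hun : ∀ n, wedgeMk ℝ k (fun i => (ρ (g n) :
            Matrix (Fin (2 * k + 1)) (Fin (2 * k + 1)) ℝ) *ᵥ u i) ≠ 0 := by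
          intro n
          rw [← auxD_mulVec hd (ρ (g n))] at hu
          exact aux_wedge_ne hd _ _ hu
        have h3 := dynamics g x y h1 h2 (w y) (hwne y) (hwx y) u hun ((aux_mul_ne _ _ _ hd _ _).2 hu)
        rw [hvx x] at h3
        exact aux_R1 k (k + 1) _ hd atTop _ hun (v x) (hvne x) h3 t t0 h0 }
  exact aux_main hp hodd _ v w htr hA.contv hA.contw
    (fun x i => aux_nested hp hBP.conv hA x (huniform x) i)

/-- **Theorem (k-Anosov into SL_{2k+1}(ℝ), k odd: boundary embeds in `S^k`).**
If `Δ` is a one-ended hyperbolic group, presented as a uniform boundary pair `(Δ, M)` with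
`M` connected, `k` is odd and `ρ : Δ → SL_{2k+1}(ℝ)` is `k`-Anosov, then `M ≅ ∂_∞Δ` admits a
continuous injection into the `k`-sphere. -/
theorem anosov_SL_2k1_boundary_embeds_in_sphere
    {Δ M : Type} [Group Δ] [TopologicalSpace M] [MulAction Δ M]
    (hBP : IsBoundaryPair Δ M)
    (huniform : ∀ x : M, IsConicalLimitPoint Δ x)
    (hconn : ConnectedSpace M)
    (k : ℕ) (hodd : Odd k)
    (ρ : Δ →* Matrix.SpecialLinearGroup (Fin (2 * k + 1)) ℝ)
    (ξk : M → Projectivization ℝ (⋀[ℝ]^k (Fin (2 * k + 1) → ℝ)))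
    (ξdk : M → Projectivization ℝ (⋀[ℝ]^((2 * k + 1) - k) (Fin (2 * k + 1) → ℝ)))
    (hAnosov : IsRelAnosov k ρ ξk ξdk) :
    ∃ f : M → Metric.sphere (0 : EuclideanSpace ℝ (Fin (k + 1))) 1,
      Continuous f ∧ Function.Injective f := by
  exact aux_all hBP huniform hconn k hodd _ (by omega) ρ ξk ξdk hAnosov.continuous_fst
    hAnosov.continuous_snd hAnosov.decomposable_fst hAnosov.decomposable_snd
    hAnosov.equivariant_snd hAnosov.transverse hAnosov.dynamics
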